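/- Let B be a standard graded polynomial ring over a field K and let I = ⟨f_1, ..., f_{n+1}⟩ be a graded ideal of linear type with grade(I) = n, deg f_j = d_j. Then the Rees algebra R(I), as a module over S = K[x_1,...,x_m, y_1,...,y_{n+1}] (with deg x_i = (1,0), deg y_j = (d_j,1)), has y-regularity equal to 0; i.e., all bigraded shifts (a,b) appearing at homological degree i in the minimal bigraded free resolution of R(I) satisfy b ≤ i. -/

import Mathlib

open Ideal

/-- A sequence `f 0, …, f (n-1)` is a *d-sequence* in `A` if
`(⟨f_0,…,f_{i-1}⟩ : f_i) ∩ ⟨f_0,…,f_{n-1}⟩ = ⟨f_0,…,f_{i-1}⟩` for every `i`. -/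
def IsDSequence {A : Type*} [CommRing A] {n : ℕ} (f : Fin n → A) : Prop :=
  ∀ i : Fin n,
    (Ideal.span (f '' {j | j < i})).colon (Ideal.span {f i}) ⊓ Ideal.span (Set.range f)
      = Ideal.span (f '' {j | j < i})

/-- A (proper) regular sequence: each `f i` is a nonzerodivisor modulo the previous ones,
and the sequence generates a proper ideal. -/
def IsRegSeq {A : Type*} [CommRing A] {n : ℕ} (f : Fin n → A) : Prop :=
  (∀ i : Fin n, ∀ a : A, a * f i ∈ Ideal.span (f '' {j | j < i}) →
      a ∈ Ideal.span (f '' {j | j < i}))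
  ∧ Ideal.span (Set.range f) ≠ ⊤

/-- Extension of an `ℕ`-graded family of submodules to `ℤ` (zero in negative degrees). -/
def zg {K A : Type*} [Semiring K] [AddCommMonoid A] [Module K A]
    (𝒜 : ℕ → Submodule K A) : ℤ → Submodule K A :=
  fun z => if 0 ≤ z then 𝒜 z.toNat else ⊥

/-- The irrelevant (graded maximal) ideal of a graded algebra. -/
def irrel {K A : Type*} [CommRing K] [CommRing A] [Algebra K A]
    (𝒜 : ℕ → Submodule K A) : Ideal A :=
  Ideal.span (⋃ n : ℕ, ((𝒜 (n + 1) : Submodule K A) : Set A))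

/-- `𝒜` is a standard grading: `𝒜 0 = K·1`, the grading is generated in degree one,
and the degree-one part is finitely generated. -/
def IsStdGraded {K A : Type*} [CommSemiring K] [Semiring A] [Algebra K A]
    (𝒜 : ℕ → Submodule K A) : Prop :=
  𝒜 0 = 1 ∧ (∀ n : ℕ, 𝒜 (n + 1) = 𝒜 1 * 𝒜 n) ∧ (𝒜 1).FG

/-- A minimal graded free resolution of the graded module `M` (graded pieces `ℳ`) over the
`γ`-graded ring `A` (graded pieces `𝒜`, graded maximal ideal `𝔪`):
free modules `ι i →₀ A` with generator degrees `σ i`, differentials `d`, augmentation `ε`,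
which is exact, with graded differentials and augmentation, and minimal
(all differentials land in `𝔪 • F`). -/
structure MinGradedFreeRes (K : Type) [Field K] (A : Type) [CommRing A] [Algebra K A]
    {γ : Type} [AddCommGroup γ] (𝒜 : γ → Submodule K A) (𝔪 : Ideal A)
    (M : Type) [AddCommGroup M] [Module A M] [Module K M]
    (ℳ : γ → Submodule K M) where
  ι : ℕ → Type
  fin : ∀ i, Finite (ι i)
  σ : ∀ i, ι i → γ
  d : ∀ i, (ι (i + 1) →₀ A) →ₗ[A] (ι i →₀ A)
  ε : (ι 0 →₀ A) →ₗ[A] M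
  exact_d : ∀ i, Function.Exact (d (i + 1)) (d i)
  exact_ε : Function.Exact (d 0) ε
  surj : Function.Surjective ε
  graded_d : ∀ (i : ℕ) (j : γ) (f : ι (i + 1) →₀ A),
      (∀ k, f k ∈ 𝒜 (j - σ (i + 1) k)) → ∀ k, (d i f) k ∈ 𝒜 (j - σ i k)
  graded_ε : ∀ (j : γ) (f : ι 0 →₀ A),
      (∀ k, f k ∈ 𝒜 (j - σ 0 k)) → ε f ∈ ℳ j
  minimal : ∀ (i : ℕ) (f : ι (i + 1) →₀ A), d i f ∈ 𝔪 • (⊤ : Submodule A (ι i →₀ A))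

/-- Castelnuovo–Mumford regularity read off from a minimal graded free resolution:
`sup { (degree of a generator of F_i) - i }`. -/
noncomputable def MinGradedFreeRes.reg {K : Type} [Field K] {A : Type} [CommRing A]
    [Algebra K A] {𝒜 : ℤ → Submodule K A} {𝔪 : Ideal A} {M : Type} [AddCommGroup M]
    [Module A M] [Module K M] {ℳ : ℤ → Submodule K M}
    (R : MinGradedFreeRes K A 𝒜 𝔪 M ℳ) : ℤ :=
  sSup {x : ℤ | ∃ (i : ℕ) (k : R.ι i), x = R.σ i k - (i : ℤ)}

/-- The graded pieces of a quotient module `A ⧸ J`. -/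
def quotPieces {K A : Type*} [Field K] [CommRing A] [Algebra K A]
    (𝒜 : ℕ → Submodule K A) (J : Ideal A) : ℤ → Submodule K (A ⧸ J) :=
  fun j => (zg 𝒜 j).map ((J.mkQ).restrictScalars K)


/-- The element `f·X ∈ R(I)` for `f ∈ I`. -/
noncomputable def fX {B : Type*} [CommRing B] (I : Ideal B) (g : B) (hg : g ∈ I) :
    reesAlgebra I :=
  ⟨Polynomial.C g * Polynomial.X, by
    rw [mem_reesAlgebra_iff]
    intro i
    rcases eq_or_ne i 1 with h | h
    · subst h; simpa using hg
    · simp [Polynomial.coeff_C_mul, Polynomial.coeff_X, h, Ne.symm h]⟩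

/-- The presentation `S = B[y_0,…,y_n] → R(I)`, `y_j ↦ f_j X`. -/
noncomputable def reesStructureMap {B : Type*} [CommRing B] {n : ℕ} (I : Ideal B)
    (f : Fin (n + 1) → B) (hf : ∀ j, f j ∈ I) :
    MvPolynomial (Fin (n + 1)) B →ₐ[B] reesAlgebra I :=
  MvPolynomial.aeval (fun j => fX I (f j) (hf j))

/-- The `S`-module structure on `R(I)` induced by the presentation. -/
noncomputable def reesModule {B : Type*} [CommRing B] {n : ℕ} (I : Ideal B)
    (f : Fin (n + 1) → B) (hf : ∀ j, f j ∈ I) :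
    Module (MvPolynomial (Fin (n + 1)) B) (reesAlgebra I) :=
  Module.compHom _ (reesStructureMap I f hf).toRingHom

/-- `p ∈ S` is linear in the `y`-variables. -/
def YLinear {B : Type*} [CommRing B] {n : ℕ} (p : MvPolynomial (Fin (n + 1)) B) : Prop :=
  ∀ w : Fin (n + 1) →₀ ℕ, MvPolynomial.coeff w p ≠ 0 → (∑ j, w j) ≤ 1

/-- `I` is of linear type (with respect to the presentation `φ` coming from the chosen
generators): the defining ideal of the Rees algebra is generated by elements that are
linear in the second set of variables. -/
def IsLinearTypePres {B : Type*} [CommRing B] {n : ℕ} {I : Ideal B}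
    (φ : MvPolynomial (Fin (n + 1)) B →ₐ[B] reesAlgebra I) : Prop :=
  ∃ G : Set (MvPolynomial (Fin (n + 1)) B),
    (∀ p ∈ G, YLinear p) ∧ RingHom.ker φ.toRingHom = Ideal.span G

/-- A free resolution of `M` over `A`. -/
structure FreeRes (A : Type*) [CommRing A] (M : Type*) [AddCommGroup M] [Module A M] where
  ι : ℕ → Type
  d : ∀ i, (ι (i + 1) →₀ A) →ₗ[A] (ι i →₀ A)
  ε : (ι 0 →₀ A) →ₗ[A] M
  exact_d : ∀ i, Function.Exact (d (i + 1)) (d i)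
  exact_ε : Function.Exact (d 0) ε
  surj : Function.Surjective ε

/-- Projective dimension, as the least length of a free resolution. -/
noncomputable def projDim (A : Type*) [CommRing A] (M : Type*) [AddCommGroup M]
    [Module A M] : ℕ∞ :=
  sInf {e : ℕ∞ | ∃ k : ℕ, e = (k : ℕ∞) ∧
    ∃ R : FreeRes A M, ∀ i : ℕ, k < i → IsEmpty (R.ι i)}

/-- The height of an ideal: the infimum of the heights of primes containing it. -/
noncomputable def idealHeight {A : Type*} [CommRing A] (I : Ideal A) : ℕ∞ :=
  ⨅ (p : PrimeSpectrum A) (_ : I ≤ p.asIdeal), Order.height p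

/-- The minimal number of generators of an ideal. -/
noncomputable def minGens {A : Type*} [CommRing A] (I : Ideal A) : ℕ :=
  sInf {k : ℕ | ∃ g : Fin k → A, I = Ideal.span (Set.range g)}


/-- The `(a,b)`-bigraded piece of `B`-coefficients indexed by a `y`-exponent `w`
(with `deg x_i = (1,0)`, `deg y_j = (d_j, 1)`). -/
noncomputable def SAux (K : Type) [Field K] (m n : ℕ) (d : Fin (n + 1) → ℕ)
    (ab : ℤ × ℤ) (w : Fin (n + 1) →₀ ℕ) : Submodule K (MvPolynomial (Fin m) K) :=
  if (∑ j, (w j : ℤ)) = ab.2 ∧ 0 ≤ ab.1 - ∑ j, (w j : ℤ) * (d j : ℤ) then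
    MvPolynomial.homogeneousSubmodule (Fin m) K (ab.1 - ∑ j, (w j : ℤ) * (d j : ℤ)).toNat
  else ⊥

/-- The bigraded pieces of `S = B[y_0,…,y_n]` with `deg x_i = (1,0)`, `deg y_j = (d_j,1)`. -/
noncomputable def SPieces (K : Type) [Field K] (m n : ℕ) (d : Fin (n + 1) → ℕ)
    (ab : ℤ × ℤ) : Submodule K (MvPolynomial (Fin (n + 1)) (MvPolynomial (Fin m) K)) where
  carrier := {p | ∀ w, MvPolynomial.coeff w p ∈ SAux K m n d ab w}
  add_mem' := by
    intro p q hp hq w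
    rw [MvPolynomial.coeff_add]
    exact add_mem (hp w) (hq w)
  zero_mem' := by
    intro w
    rw [MvPolynomial.coeff_zero]
    exact zero_mem _
  smul_mem' := by
    intro c p hp w
    rw [MvPolynomial.coeff_smul]
    exact Submodule.smul_mem _ c (hp w)

/-- The `(a,b)`-bigraded piece of `R(I) ⊆ B[X]` at the `X`-exponent `i`: zero unless
`i = b` and `a ≥ 0`, in which case it is `(I^i)_a`. -/
noncomputable def RAux (K : Type) [Field K] (m : ℕ) (I : Ideal (MvPolynomial (Fin m) K))
    (ab : ℤ × ℤ) (i : ℕ) : Submodule K (MvPolynomial (Fin m) K) :=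
  if (i : ℤ) = ab.2 ∧ 0 ≤ ab.1 then
    (Submodule.restrictScalars K (I ^ i)) ⊓
      MvPolynomial.homogeneousSubmodule (Fin m) K ab.1.toNat
  else ⊥

/-- The bigraded pieces of the Rees algebra `R(I)`. -/
noncomputable def RPieces (K : Type) [Field K] (m : ℕ) (I : Ideal (MvPolynomial (Fin m) K))
    (ab : ℤ × ℤ) : Submodule K (reesAlgebra I) where
  carrier := {x | ∀ i : ℕ, (x : Polynomial (MvPolynomial (Fin m) K)).coeff i ∈ RAux K m I ab i}
  add_mem' := by
    intro x y hx hy i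
    rw [Subalgebra.coe_add, Polynomial.coeff_add]
    exact add_mem (hx i) (hy i)
  zero_mem' := by
    intro i
    rw [show (((0 : reesAlgebra I) : Polynomial (MvPolynomial (Fin m) K))) = 0 from rfl,
      Polynomial.coeff_zero]
    exact zero_mem _
  smul_mem' := by
    intro c x hx i
    rw [show (((c • x : reesAlgebra I) : Polynomial (MvPolynomial (Fin m) K)))
        = c • (x : Polynomial (MvPolynomial (Fin m) K)) from rfl,
      Polynomial.coeff_smul]
    exact Submodule.smul_mem _ c (hx i)

/-- The bigraded irrelevant maximal ideal of `S`. -/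
noncomputable def mS (K : Type) [Field K] (m n : ℕ) :
    Ideal (MvPolynomial (Fin (n + 1)) (MvPolynomial (Fin m) K)) :=
  Ideal.span
    (Set.range (MvPolynomial.X : Fin (n + 1) →
        MvPolynomial (Fin (n + 1)) (MvPolynomial (Fin m) K)) ∪
      Set.range (fun i : Fin m =>
        (MvPolynomial.C (MvPolynomial.X i) :
          MvPolynomial (Fin (n + 1)) (MvPolynomial (Fin m) K))))

section Kos
set_option linter.unusedSectionVars false

/-- Underlying group of the Koszul complex. -/
def KT {α : Type} (N : Type) : List α → Type
  | [] => N
  | _ :: l => KT N l × KT N l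

noncomputable instance KT.inst {α : Type} (N : Type) [AddCommGroup N] :
    (l : List α) → AddCommGroup (KT N l)
  | [] => inferInstanceAs (AddCommGroup N)
  | _ :: l => @Prod.instAddCommGroup _ _ (KT.inst N l) (KT.inst N l)

variable {α : Type} {N N' N'' : Type} [AddCommGroup N] [AddCommGroup N'] [AddCommGroup N'']

/-- Functoriality. -/
noncomputable def KT.map (g : N →+ N') : (l : List α) → KT N l →+ KT N' l
  | [] => g
  | _ :: l => AddMonoidHom.prodMap (KT.map g l) (KT.map g l)

/-- Koszul differential. -/
noncomputable def KT.dd (φ : α → N →+ N) : (l : List α) → KT N l →+ KT N l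
  | [] => 0
  | a :: l => AddMonoidHom.prod
      ((KT.dd φ l).comp (AddMonoidHom.fst _ _) + (KT.map (φ a) l).comp (AddMonoidHom.snd _ _))
      (-((KT.dd φ l).comp (AddMonoidHom.snd _ _)))

/-- Homogeneous part of exterior degree `j` with coefficients in `W`. -/
noncomputable def KD (W : AddSubgroup N) : (l : List α) → ℤ → AddSubgroup (KT N l)
  | [], j => if j = 0 then W else ⊥
  | _ :: l, j => AddSubgroup.prod (KD W l j) (KD W l (j - 1))

/-- degree 0 embedding -/
noncomputable def KT.inj : (l : List α) → N →+ KT N l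
  | [] => AddMonoidHom.id N
  | _ :: l => AddMonoidHom.prod (KT.inj l) 0

/-- degree 0 coordinate -/
noncomputable def KT.pr0 : (l : List α) → KT N l →+ N
  | [] => AddMonoidHom.id N
  | _ :: l => (KT.pr0 l).comp (AddMonoidHom.fst _ _)

theorem KT.map_cons (g : N →+ N') (a : α) (l : List α) (x y : KT N l) :
    KT.map g (a :: l) (x, y) = (KT.map g l x, KT.map g l y) := rfl

theorem KT.dd_cons (φ : α → N →+ N) (a : α) (l : List α) (x y : KT N l) :
    KT.dd φ (a :: l) (x, y) = (KT.dd φ l x + KT.map (φ a) l y, - KT.dd φ l y) := rfl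

theorem KT.dd_nil (φ : α → N →+ N) (x : KT N ([] : List α)) : KT.dd φ [] x = 0 := rfl

theorem KD_cons {W : AddSubgroup N} {a : α} {l : List α} {j : ℤ} {x y : KT N l} :
    ((x, y) : KT N (a :: l)) ∈ KD W (a :: l) j ↔ x ∈ KD W l j ∧ y ∈ KD W l (j - 1) := Iff.rfl

theorem KD_nil_zero {W : AddSubgroup N} {x : N} :
    (x : KT N ([] : List α)) ∈ KD W ([] : List α) 0 ↔ x ∈ W := by
  simp only [KD]; rfl

theorem KD_nil_ne {W : AddSubgroup N} {j : ℤ} (hj : j ≠ 0) {x : N} :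
    (x : KT N ([] : List α)) ∈ KD W ([] : List α) j ↔ x = 0 := by
  have h : KD W ([] : List α) j = ⊥ := if_neg hj
  rw [h]; exact AddSubgroup.mem_bot

theorem KT.cons_eq {l : List α} {x y x' y' : KT N l}
    (h1 : x = x') (h2 : y = y') : ((x, y) : KT N l × KT N l) = (x', y') := by rw [h1, h2]

theorem KT.cons_inj {l : List α} {x y x' y' : KT N l}
    (h : ((x, y) : KT N l × KT N l) = (x', y')) : x = x' ∧ y = y' := Prod.mk.inj h

theorem KT.cons_zero {a : α} {l : List α} : (0 : KT N (a :: l)) = ((0, 0) : KT N l × KT N l) := rfl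

theorem KT.cons_add {a : α} {l : List α} (x y x' y' : KT N l) :
    ((x, y) : KT N (a :: l)) + ((x', y') : KT N (a :: l)) =
      ((x + x', y + y') : KT N l × KT N l) := rfl

theorem KT.cons_sub {a : α} {l : List α} (x y x' y' : KT N l) :
    ((x, y) : KT N (a :: l)) - ((x', y') : KT N (a :: l)) =
      ((x - x', y - y') : KT N l × KT N l) := rfl

theorem KT.map_map (g : N →+ N') (h : N' →+ N'') (l : List α) (x : KT N l) :
    KT.map h l (KT.map g l x) = KT.map (h.comp g) l x := by
  induction l with
  | nil => rfl
  | cons a l ih =>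
    obtain ⟨x, y⟩ := x
    exact KT.cons_eq (ih x) (ih y)

theorem KT.map_id (l : List α) (x : KT N l) : KT.map (AddMonoidHom.id N) l x = x := by
  induction l with
  | nil => rfl
  | cons a l ih =>
    obtain ⟨x, y⟩ := x
    exact KT.cons_eq (ih x) (ih y)

theorem KT.map_add' (g h : N →+ N') (l : List α) (x : KT N l) :
    KT.map (g + h) l x = KT.map g l x + KT.map h l x := by
  induction l with
  | nil => rfl
  | cons a l ih =>
    obtain ⟨x, y⟩ := x
    exact KT.cons_eq (ih x) (ih y)

theorem KT.map_sub' (g h : N →+ N') (l : List α) (x : KT N l) :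
    KT.map (g - h) l x = KT.map g l x - KT.map h l x := by
  induction l with
  | nil => rfl
  | cons a l ih =>
    obtain ⟨x, y⟩ := x
    exact KT.cons_eq (ih x) (ih y)

theorem KT.map_zero' (l : List α) (x : KT N l) :
    KT.map (0 : N →+ N') l x = 0 := by
  induction l with
  | nil => rfl
  | cons a l ih =>
    obtain ⟨x, y⟩ := x
    exact KT.cons_eq (ih x) (ih y)

theorem KT.map_comm {g h : N →+ N} (hc : ∀ x, g (h x) = h (g x)) (l : List α) (x : KT N l) :
    KT.map g l (KT.map h l x) = KT.map h l (KT.map g l x) := by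
  rw [KT.map_map, KT.map_map]
  congr 1
  congr 1
  ext x
  exact hc x

theorem KT.map_dd (g : N →+ N') (φ : α → N →+ N) (ψ : α → N' →+ N') (l : List α)
    (h : ∀ a ∈ l, ∀ x, g (φ a x) = ψ a (g x)) (x : KT N l) :
    KT.map g l (KT.dd φ l x) = KT.dd ψ l (KT.map g l x) := by
  induction l with
  | nil => exact _root_.map_zero g
  | cons a l ih =>
    obtain ⟨x, y⟩ := x
    have ih' := ih (fun b hb => h b (List.mem_cons_of_mem a hb))
    rw [KT.dd_cons, KT.map_cons, KT.map_cons, KT.dd_cons]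
    refine KT.cons_eq ?_ ?_
    · rw [_root_.map_add, ih', KT.map_map, KT.map_map]
      congr 2
      congr 1
      ext z
      exact h a List.mem_cons_self z
    · rw [_root_.map_neg, ih']

theorem KT.dd_congr {φ ψ : α → N →+ N} (l : List α) (h : ∀ a ∈ l, φ a = ψ a) :
    KT.dd φ l = KT.dd ψ l := by
  ext x
  have := KT.map_dd (AddMonoidHom.id N) φ ψ l (fun a ha x => by rw [h a ha]; rfl) x
  rwa [KT.map_id, KT.map_id] at this

theorem KT.dd_anti (φ ψ : α → N →+ N) (l : List α)
    (h : ∀ a ∈ l, ∀ b ∈ l, ∀ x, φ a (ψ b x) = ψ b (φ a x)) (x : KT N l) :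
    KT.dd φ l (KT.dd ψ l x) = - KT.dd ψ l (KT.dd φ l x) := by
  induction l with
  | nil => simp only [KT.dd_nil, _root_.neg_zero]
  | cons a l ih =>
    obtain ⟨x, y⟩ := x
    have ih' := ih (fun b hb c hc => h b (List.mem_cons_of_mem a hb) c (List.mem_cons_of_mem a hc))
    have h1 := KT.map_dd (φ a) ψ ψ l
      (fun b hb x => h a List.mem_cons_self b (List.mem_cons_of_mem a hb) x) y
    have h2 := KT.map_dd (ψ a) φ φ l
      (fun b hb x => (h b (List.mem_cons_of_mem a hb) a List.mem_cons_self x).symm) y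
    simp only [KT.dd_cons]
    refine KT.cons_eq ?_ ?_
    · simp only [_root_.map_add, _root_.map_neg, ih', h1, h2]
      abel
    · simp only [_root_.map_neg, ih' y, neg_neg]

theorem KT.dd_dd (φ : α → N →+ N) (l : List α)
    (h : ∀ a ∈ l, ∀ b ∈ l, ∀ x, φ a (φ b x) = φ b (φ a x)) (x : KT N l) :
    KT.dd φ l (KT.dd φ l x) = 0 := by
  induction l with
  | nil => simp only [KT.dd_nil]
  | cons a l ih =>
    obtain ⟨x, y⟩ := x
    have ih' := ih (fun b hb c hc => h b (List.mem_cons_of_mem a hb) c (List.mem_cons_of_mem a hc))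
    have h1 := KT.map_dd (φ a) φ φ l
      (fun b hb x => h a List.mem_cons_self b (List.mem_cons_of_mem a hb) x) y
    simp only [KT.dd_cons]
    refine KT.cons_eq ?_ ?_
    · simp only [_root_.map_add, _root_.map_neg, ih', h1]
      abel
    · simp only [_root_.map_neg, ih' y, neg_zero]

theorem KD_map {g : N →+ N'} {W : AddSubgroup N} {W' : AddSubgroup N'}
    (h : ∀ x ∈ W, g x ∈ W') {l : List α} {j : ℤ} {x : KT N l} (hx : x ∈ KD W l j) :
    KT.map g l x ∈ KD W' l j := by
  induction l generalizing j with
  | nil =>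
    by_cases hj : j = 0
    · subst hj
      exact KD_nil_zero.2 (h _ (KD_nil_zero.1 hx))
    · have hx : x = 0 := (KD_nil_ne hj).1 hx
      rw [hx, _root_.map_zero]; exact zero_mem _
  | cons a l ih =>
    obtain ⟨x, y⟩ := x
    exact ⟨ih hx.1, ih hx.2⟩

theorem KD_mono {W W' : AddSubgroup N} (h : W ≤ W') {l : List α} {j : ℤ} {x : KT N l}
    (hx : x ∈ KD W l j) : x ∈ KD W' l j := by
  have := KD_map (g := AddMonoidHom.id N) (W' := W') (fun x hx => h hx) hx
  rwa [KT.map_id] at this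

theorem KD_dd {φ : α → N →+ N} {W W' : AddSubgroup N} {l : List α}
    (h : ∀ a ∈ l, ∀ x ∈ W, φ a x ∈ W')  {j : ℤ} {x : KT N l} (hx : x ∈ KD W l j) :
    KT.dd φ l x ∈ KD W' l (j - 1) := by
  induction l generalizing j with
  | nil => exact zero_mem _
  | cons a l ih =>
    obtain ⟨x, y⟩ := x
    have ih' := fun {j} {x} => @ih (fun b hb => h b (List.mem_cons_of_mem a hb)) j x
    rw [KT.dd_cons]
    exact KD_cons.2 ⟨add_mem (ih' hx.1) (KD_map (h a List.mem_cons_self) hx.2), neg_mem (ih' hx.2)⟩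

theorem KD_neg {W : AddSubgroup N} {l : List α} {j : ℤ} (hj : j < 0) {x : KT N l}
    (hx : x ∈ KD W l j) : x = 0 := by
  induction l generalizing j with
  | nil => exact (KD_nil_ne hj.ne).1 hx
  | cons a l ih =>
    obtain ⟨x, y⟩ := x
    exact KT.cons_eq (ih hj hx.1) (ih (by omega) hx.2)

theorem KD_big {W : AddSubgroup N} {l : List α} {j : ℤ} (hj : l.length < j) {x : KT N l}
    (hx : x ∈ KD W l j) : x = 0 := by
  induction l generalizing j with
  | nil => exact (KD_nil_ne (by simpa using hj.ne')).1 hx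
  | cons a l ih =>
    obtain ⟨x, y⟩ := x
    simp only [List.length_cons, Nat.cast_add, Nat.cast_one] at hj
    exact KT.cons_eq (ih (by omega) hx.1) (ih (by omega) hx.2)

theorem KD_bot {l : List α} {j : ℤ} {x : KT N l}
    (hx : x ∈ KD (⊥ : AddSubgroup N) l j) : x = 0 := by
  have := KD_map (g := AddMonoidHom.id N) (W' := ⊥) (fun x hx => hx) hx
  induction l generalizing j with
  | nil =>
    by_cases hj : j = 0
    · subst hj
      exact KD_nil_zero.1 hx
    · exact (KD_nil_ne hj).1 hx
  | cons a l ih =>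
    obtain ⟨x, y⟩ := x
    exact KT.cons_eq (ih hx.1 this.1) (ih hx.2 this.2)

theorem KD_lift {g : N →+ N'} {W : AddSubgroup N} {W' : AddSubgroup N'}
    (h : ∀ y ∈ W', ∃ x ∈ W, g x = y) {l : List α} {j : ℤ} {y : KT N' l} (hy : y ∈ KD W' l j) :
    ∃ x ∈ KD W l j, KT.map g l x = y := by
  induction l generalizing j with
  | nil =>
    by_cases hj : j = 0
    · subst hj
      obtain ⟨x, hx, e⟩ := h _ (KD_nil_zero.1 hy)
      exact ⟨x, KD_nil_zero.2 hx, e⟩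
    · have hy : y = 0 := (KD_nil_ne hj).1 hy
      exact ⟨0, zero_mem _, by rw [hy, _root_.map_zero]⟩
  | cons a l ih =>
    obtain ⟨x, y⟩ := y
    obtain ⟨x', h1, e1⟩ := ih hy.1
    obtain ⟨y', h2, e2⟩ := ih hy.2
    exact ⟨(x', y'), ⟨h1, h2⟩, KT.cons_eq e1 e2⟩

/-- elements killed by a family of maps -/
theorem KD_ker {β : Type} {g : β → N →+ N'} {W W' : AddSubgroup N}
    (h : ∀ x ∈ W, (∀ b, g b x = 0) → x ∈ W') {l : List α} {j : ℤ} {x : KT N l}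
    (hx : x ∈ KD W l j) (hg : ∀ b, KT.map (g b) l x = 0) : x ∈ KD W' l j := by
  induction l generalizing j with
  | nil =>
    by_cases hj : j = 0
    · subst hj
      exact KD_nil_zero.2 (h _ (KD_nil_zero.1 hx) hg)
    · have hx : x = 0 := (KD_nil_ne hj).1 hx
      rw [hx]; exact zero_mem _
  | cons a l ih =>
    obtain ⟨x, y⟩ := x
    exact ⟨ih hx.1 (fun b => (KT.cons_inj (hg b)).1), ih hx.2 (fun b => (KT.cons_inj (hg b)).2)⟩

theorem KT.pr0_inj (l : List α) (x : N) : KT.pr0 l (KT.inj l x) = x := by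
  induction l with
  | nil => rfl
  | cons a l ih => exact ih

theorem KT.dd_inj (φ : α → N →+ N) (l : List α) (x : N) : KT.dd φ l (KT.inj l x) = 0 := by
  induction l with
  | nil => rfl
  | cons a l ih =>
    change KT.dd φ (a :: l) (KT.inj l x, 0) = 0
    rw [KT.dd_cons, ih, _root_.map_zero, _root_.map_zero, neg_zero, add_zero]; rfl

theorem KT.map_inj (g : N →+ N') (l : List α) (x : N) :
    KT.map g l (KT.inj l x) = KT.inj l (g x) := by
  induction l with
  | nil => rfl
  | cons a l ih =>
    change KT.map g (a :: l) (KT.inj l x, 0) = (KT.inj l (g x), 0)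
    rw [KT.map_cons, ih, _root_.map_zero]

theorem KD_inj {W : AddSubgroup N} {l : List α} {x : N} (hx : x ∈ W) :
    KT.inj l x ∈ KD W l 0 := by
  induction l with
  | nil => exact KD_nil_zero.2 hx
  | cons a l ih => exact ⟨ih, zero_mem _⟩

theorem KD_zero {W : AddSubgroup N} {l : List α} {x : KT N l} (hx : x ∈ KD W l 0) :
    KT.pr0 l x ∈ W ∧ x = KT.inj l (KT.pr0 l x) := by
  induction l with
  | nil => exact ⟨KD_nil_zero.1 hx, rfl⟩
  | cons a l ih =>
    obtain ⟨x, y⟩ := x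
    exact ⟨(ih hx.1).1, KT.cons_eq (ih hx.1).2 (KD_neg (by norm_num) hx.2)⟩

/-- Vanishing of Koszul homology in degree `(j, b)`. -/
def VV (φ : α → N →+ N) (l : List α) (G : ℤ → AddSubgroup N) (j b : ℤ) : Prop :=
  ∀ z ∈ KD (G (b - j)) l j, KT.dd φ l z = 0 →
    ∃ w ∈ KD (G (b - j - 1)) l (j + 1), KT.dd φ l w = z

theorem VV_les1 {φ : α → N →+ N} {ψ : α → N' →+ N'} {l : List α}
    {P P' : ℤ → AddSubgroup N} {Q : ℤ → AddSubgroup N'} (g : N →+ N')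
    (hc : ∀ a ∈ l, ∀ b ∈ l, ∀ x, φ a (φ b x) = φ b (φ a x))
    (hφ : ∀ a ∈ l, ∀ b, ∀ x ∈ P b, φ a x ∈ P (b + 1))
    (hg : ∀ a ∈ l, ∀ x, g (φ a x) = ψ a (g x))
    (hgP : ∀ b, ∀ x ∈ P b, g x ∈ Q b)
    (hle : ∀ b, P' b ≤ P b) (h0 : ∀ b, ∀ x ∈ P' b, g x = 0)
    (hker : ∀ b, ∀ x ∈ P b, g x = 0 → x ∈ P' b)
    (hsurj : ∀ b, ∀ y ∈ Q b, ∃ x ∈ P b, g x = y) {j b : ℤ}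
    (h1 : VV φ l P j b) (h2 : VV φ l P' (j - 1) b) : VV ψ l Q j b := by
  intro z hz hdz
  obtain ⟨z1, hz1, e1⟩ := KD_lift (hsurj (b - j)) hz
  have hd : KT.dd φ l z1 ∈ KD (P' (b - (j - 1))) l (j - 1) := by
    refine KD_ker (β := Unit) (g := fun _ => g) (W := P (b - (j - 1)))
      (fun x hx h => hker _ x hx (h ())) (KD_dd (W := P (b - j)) ?_ hz1) ?_
    · intro a ha x hx
      have := hφ a ha _ x hx
      rwa [show b - j + 1 = b - (j - 1) by ring] at this
    · intro _
      rw [KT.map_dd g φ ψ l hg, e1, hdz]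
  obtain ⟨w, hw, e2⟩ := h2 _ hd (KT.dd_dd φ l hc z1)
  rw [show b - (j - 1) - 1 = b - j by ring, show j - 1 + 1 = j by ring] at hw
  obtain ⟨v, hv, e3⟩ := h1 (z1 - w) (sub_mem hz1 (KD_mono (hle _) hw))
    (by rw [_root_.map_sub, e2, sub_self])
  refine ⟨KT.map g l v, KD_map (hgP _) hv, ?_⟩
  rw [← KT.map_dd g φ ψ l hg, e3, _root_.map_sub, e1]
  have : KT.map g l w = 0 := KD_bot (KD_map (W' := ⊥) (fun x hx => h0 _ x hx) hw)
  rw [this, sub_zero]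

theorem VV_les2 {φ : α → N →+ N} {ψ : α → N' →+ N'} {l : List α}
    {P P' : ℤ → AddSubgroup N} {Q : ℤ → AddSubgroup N'} (g : N →+ N')
    (hc : ∀ a ∈ l, ∀ b ∈ l, ∀ x, φ a (φ b x) = φ b (φ a x))
    (hφ : ∀ a ∈ l, ∀ b, ∀ x ∈ P b, φ a x ∈ P (b + 1))
    (hg : ∀ a ∈ l, ∀ x, g (φ a x) = ψ a (g x))
    (hgP : ∀ b, ∀ x ∈ P b, g x ∈ Q b)
    (hle : ∀ b, P' b ≤ P b) (h0 : ∀ b, ∀ x ∈ P' b, g x = 0)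
    (hker : ∀ b, ∀ x ∈ P b, g x = 0 → x ∈ P' b)
    (hsurj : ∀ b, ∀ y ∈ Q b, ∃ x ∈ P b, g x = y) {j b : ℤ}
    (h1 : VV φ l P j b) (h2 : VV ψ l Q (j + 1) b) : VV φ l P' j b := by
  intro z hz hdz
  obtain ⟨w, hw, e1⟩ := h1 z (KD_mono (hle _) hz) hdz
  have hw' : KT.map g l w ∈ KD (Q (b - (j + 1))) l (j + 1) := by
    rw [show b - (j + 1) = b - j - 1 by ring]; exact KD_map (hgP _) hw
  obtain ⟨u, hu, e2⟩ := h2 _ hw' (by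
    rw [← KT.map_dd g φ ψ l hg, e1]
    exact KD_bot (KD_map (W' := ⊥) (fun x hx => h0 _ x hx) hz))
  obtain ⟨u', hu', e3⟩ := KD_lift (hsurj _) hu
  refine ⟨w - KT.dd φ l u', ?_, ?_⟩
  · have hd : KT.dd φ l u' ∈ KD (P (b - j - 1)) l (j + 1) := by
      have := KD_dd (W' := P (b - j - 1)) (φ := φ) (fun a ha x hx => by
        have := hφ a ha _ x hx
        rwa [show b - (j + 1) - 1 + 1 = b - j - 1 by ring] at this) hu'
      rwa [show j + 1 + 1 - 1 = j + 1 by ring] at this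
    refine KD_ker (β := Unit) (g := fun _ => g) (fun x hx h => hker _ x hx (h ()))
      (sub_mem hw hd) ?_
    intro _
    rw [_root_.map_sub, KT.map_dd g φ ψ l hg, e3, e2, sub_self]
  · rw [_root_.map_sub, e1, KT.dd_dd φ l hc, sub_zero]

/-- Contraction lemma. -/
theorem KT_contract {φ T : α → N →+ N} {l : List α} (hl : l.Nodup)
    (hc : ∀ a b x, φ a (φ b x) = φ b (φ a x))
    (hT1 : ∀ a x, T a (φ a x) = x)
    (hT2 : ∀ a b, a ≠ b → ∀ x, T a (φ b x) = φ b (T a x))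
    (hT3 : ∀ a b x, T a (T b x) = T b (T a x))
    (W W' : AddSubgroup N) (hW : ∀ a ∈ l, ∀ x ∈ W, T a x ∈ W')
    (hW' : ∀ a ∈ l, ∀ x ∈ W', φ a x ∈ W)
    (j : ℤ) (z : KT N l) (hz : z ∈ KD W l j) (hdz : KT.dd φ l z = 0) :
    ∃ w ∈ KD W' l (j + 1), ∃ c ∈ W, (∀ a ∈ l, T a c = 0) ∧
      z = KT.dd φ l w + (if j = 0 then KT.inj l c else 0) := by
  induction l generalizing W W' j with
  | nil =>
    by_cases hj : j = 0
    · subst hj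
      refine ⟨0, zero_mem _, z, KD_nil_zero.1 hz, by simp, ?_⟩
      rw [_root_.map_zero, zero_add, if_pos rfl]; rfl
    · have hx : z = 0 := (KD_nil_ne hj).1 hz
      exact ⟨0, zero_mem _, 0, zero_mem _, by simp, by simp [hx, hj]⟩
  | cons a l ih =>
    obtain ⟨x, y⟩ := z
    obtain ⟨ha, hl⟩ := List.nodup_cons.1 hl
    rw [KT.dd_cons] at hdz
    obtain ⟨hd1, hd2⟩ := KT.cons_inj hdz
    have hd2 : KT.dd φ l y = 0 := neg_eq_zero.1 hd2
    have hTd : ∀ x : KT N l, KT.map (T a) l (KT.dd φ l x) = KT.dd φ l (KT.map (T a) l x) :=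
      fun x => KT.map_dd _ _ _ _ (fun b hb x => hT2 a b (by rintro rfl; exact ha hb) x) x
    have hφd : ∀ x : KT N l, KT.map (φ a) l (KT.dd φ l x) = KT.dd φ l (KT.map (φ a) l x) :=
      fun x => KT.map_dd _ _ _ _ (fun b hb x => hc a b x) x
    have hTφ : ∀ x : KT N l, KT.map (T a) l (KT.map (φ a) l x) = x := fun x => by
      rw [KT.map_map]
      conv_rhs => rw [← KT.map_id l x]
      congr 1; congr 1; ext z; exact hT1 a z
    have hy : y = - KT.dd φ l (KT.map (T a) l x) := by
      rw [← hTd, ← hTφ y, ← _root_.map_neg, ← eq_neg_iff_add_eq_zero.2 hd1 |> neg_eq_iff_eq_neg.2]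
    set x' := x - KT.map (φ a) l (KT.map (T a) l x) with hx'
    have hx'1 : x' ∈ KD W l j := sub_mem hz.1 (KD_map (hW' a List.mem_cons_self)
      (KD_map (hW a List.mem_cons_self) hz.1))
    have hTx' : KT.map (T a) l x' = 0 := by rw [hx', _root_.map_sub, hTφ, sub_self]
    have hx'2 : x' ∈ KD (W ⊓ (T a).ker) l j :=
      KD_ker (β := Unit) (g := fun _ => T a) (fun x hx h => AddSubgroup.mem_inf.2 ⟨hx, h ()⟩) hx'1 (fun _ => hTx')
    have hdx' : KT.dd φ l x' = 0 := by
      rw [hx', _root_.map_sub, ← hφd, ← hTd]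
      have : KT.dd φ l x = - KT.map (φ a) l y := eq_neg_of_add_eq_zero_left hd1
      rw [this, _root_.map_neg, _root_.map_neg, hTφ, sub_self]
    obtain ⟨w, hw, c, hcW, hcT, e⟩ := ih hl (W ⊓ (T a).ker) (W' ⊓ (T a).ker)
      (fun b hb x hx => by
        have hx := AddSubgroup.mem_inf.1 hx
        refine AddSubgroup.mem_inf.2 ⟨hW b (List.mem_cons_of_mem a hb) x hx.1, ?_⟩
        change T a (T b x) = 0
        rw [hT3, show T a x = 0 from hx.2, _root_.map_zero])
      (fun b hb x hx => by
        have hx := AddSubgroup.mem_inf.1 hx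
        refine AddSubgroup.mem_inf.2 ⟨hW' b (List.mem_cons_of_mem a hb) x hx.1, ?_⟩
        change T a (φ b x) = 0
        rw [hT2 a b (by rintro rfl; exact ha hb), show T a x = 0 from hx.2, _root_.map_zero])
      j x' hx'2 hdx'
    have hcW := AddSubgroup.mem_inf.1 hcW
    have hTx : KT.map (T a) l x ∈ KD W' l (j + 1 - 1) := by
      rw [add_sub_cancel_right]
      exact KD_map (hW a List.mem_cons_self) hz.1
    refine ⟨(w, KT.map (T a) l x), KD_cons.2 ⟨KD_mono inf_le_left hw, hTx⟩, c, hcW.1, ?_, ?_⟩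
    · intro b hb
      rcases List.mem_cons.1 hb with rfl | hb
      · exact hcW.2
      · exact hcT b hb
    · rw [KT.dd_cons]
      have hx : x = x' + KT.map (φ a) l (KT.map (T a) l x) := by rw [hx']; abel
      by_cases hj : j = 0
      · rw [if_pos hj] at e ⊢
        refine KT.cons_eq ?_ ?_
        · exact hx.trans (by rw [e]; exact add_right_comm _ _ _)
        · change y = - KT.dd φ l (KT.map (T a) l x) + 0
          rw [add_zero]; exact hy
      · rw [if_neg hj] at e ⊢
        refine KT.cons_eq ?_ ?_
        · exact hx.trans (by rw [e]; exact add_right_comm _ _ _)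
        · change y = - KT.dd φ l (KT.map (T a) l x) + 0
          rw [add_zero]; exact hy

end Kos

section KosB
set_option linter.unusedSectionVars false

variable {α β : Type} {N : Type} [AddCommGroup N]

theorem KT_tup (c : α → N) (W : AddSubgroup N) (l : List α) (hW : ∀ a ∈ l, c a ∈ W) :
    ∃ v ∈ KD W l 1, ∀ φ : α → N →+ N,
      KT.dd φ l v = KT.inj l ((l.map fun a => φ a (c a)).sum) := by
  induction l with
  | nil => exact ⟨0, zero_mem _, fun φ => rfl⟩
  | cons a l ih =>
    obtain ⟨v, hv, e⟩ := ih (fun b hb => hW b (List.mem_cons_of_mem a hb))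
    refine ⟨(v, KT.inj l (c a)), KD_cons.2 ⟨hv, ?_⟩, fun φ => ?_⟩
    · rw [sub_self]
      exact KD_inj (hW a List.mem_cons_self)
    · rw [KT.dd_cons, e φ, KT.map_inj, KT.dd_inj]
      refine KT.cons_eq ?_ ?_
      · rw [← _root_.map_add, List.map_cons, List.sum_cons, add_comm]
      · exact neg_zero

theorem KT_pr0_dd (φ : α → N →+ N) (W : AddSubgroup N) (l : List α) (Q : AddSubgroup N)
    (hQ : ∀ a ∈ l, ∀ x ∈ W, φ a x ∈ Q) (v : KT N l) (hv : v ∈ KD W l 1) :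
    KT.pr0 l (KT.dd φ l v) ∈ Q := by
  induction l with
  | nil => exact zero_mem _
  | cons a l ih =>
    obtain ⟨x, y⟩ := v
    have h1 := ih (fun b hb => hQ b (List.mem_cons_of_mem a hb)) x hv.1
    have h2 := hv.2
    change y ∈ KD W l (1 - 1) at h2
    rw [sub_self] at h2
    obtain ⟨h3, h4⟩ := KD_zero h2
    change KT.pr0 l (KT.dd φ l x + KT.map (φ a) l y) ∈ Q
    rw [_root_.map_add, h4, KT.map_inj, KT.pr0_inj]
    exact add_mem h1 (hQ a List.mem_cons_self _ h3)

theorem KT_homotopy (φ : α → N →+ N) (hc : ∀ a b x, φ a (φ b x) = φ b (φ a x)) (l : List α)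
    (a : α) (ha : a ∈ l) :
    ∃ e : KT N l → KT N l, (∀ x, KT.dd φ l (e x) + e (KT.dd φ l x) = KT.map (φ a) l x) ∧
      e 0 = 0 ∧ (∀ x, e (-x) = - e x) ∧ (∀ x y, e (x + y) = e x + e y) ∧
      (∀ g : N →+ N, ∀ x, e (KT.map g l x) = KT.map g l (e x)) ∧
      ∀ (W : AddSubgroup N) j x, x ∈ KD W l j → e x ∈ KD W l (j + 1) := by
  induction l with
  | nil => simp at ha
  | cons b l ih =>
    by_cases hab : a = b
    · subst hab
      refine ⟨fun x => (0, x.1), ?_, rfl, ?_, ?_, ?_, ?_⟩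
      · rintro ⟨x, y⟩
        change ((KT.dd φ l 0 + KT.map (φ a) l x + 0,
          - KT.dd φ l x + (KT.dd φ l x + KT.map (φ a) l y)) : KT N l × KT N l) =
          (KT.map (φ a) l x, KT.map (φ a) l y)
        refine KT.cons_eq ?_ ?_
        · rw [_root_.map_zero, zero_add]; exact add_zero _
        · change - KT.dd φ l x + (KT.dd φ l x + KT.map (φ a) l y) = _
          abel
      · rintro ⟨x, y⟩
        refine KT.cons_eq ?_ ?_
        · exact neg_zero.symm
        · rfl
      · rintro ⟨x, y⟩ ⟨x', y'⟩
        refine KT.cons_eq ?_ ?_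
        · exact (add_zero 0).symm
        · rfl
      · rintro g ⟨x, y⟩
        refine KT.cons_eq ?_ ?_
        · exact (_root_.map_zero (KT.map g l)).symm
        · rfl
      · rintro W j ⟨x, y⟩ hx
        refine KD_cons.2 ⟨zero_mem _, ?_⟩
        rw [add_sub_cancel_right]; exact hx.1
    · have ha' : a ∈ l := by
        rcases List.mem_cons.1 ha with h | h
        · exact absurd h hab
        · exact h
      obtain ⟨e, h1, h2, h3, h4, h5, h6⟩ := ih ha'
      refine ⟨fun x => (e x.1, - e x.2), ?_, ?_, ?_, ?_, ?_, ?_⟩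
      · rintro ⟨x, y⟩
        change ((KT.dd φ l (e x) + KT.map (φ b) l (- e y) + e (KT.dd φ l x + KT.map (φ b) l y),
          - KT.dd φ l (- e y) + (- e (- KT.dd φ l y))) : KT N l × KT N l) =
            (KT.map (φ a) l x, KT.map (φ a) l y)
        refine KT.cons_eq ?_ ?_
        · change KT.dd φ l (e x) + KT.map (φ b) l (- e y) + e (KT.dd φ l x + KT.map (φ b) l y) = _
          rw [h4, h5, _root_.map_neg, ← h1 x]; abel
        · change - KT.dd φ l (- e y) + (- e (- KT.dd φ l y)) = _
          rw [h3, _root_.map_neg, ← h1 y]; abel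
      · refine KT.cons_eq h2 ?_
        change - e 0 = 0
        rw [h2, neg_zero]
      · rintro ⟨x, y⟩
        refine KT.cons_eq (h3 x) ?_
        change - e (-y) = - - e y
        rw [h3]
      · rintro ⟨x, y⟩ ⟨x', y'⟩
        refine KT.cons_eq (h4 x x') ?_
        change - e (y + y') = - e y + - e y'
        rw [h4]; abel
      · rintro g ⟨x, y⟩
        refine KT.cons_eq (h5 g x) ?_
        change - e (KT.map g l y) = KT.map g l (- e y)
        rw [h5, _root_.map_neg]
      · rintro W j ⟨x, y⟩ hx
        refine KD_cons.2 ⟨h6 W j x hx.1, ?_⟩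
        have := neg_mem (h6 W _ y hx.2)
        rwa [show j - 1 + 1 = j + 1 - 1 by ring] at this

/-- isomorphism of Koszul complexes -/
def KIso (φ : α → N →+ N) (ψ : β → N →+ N) (l : List α) (l' : List β) : Prop :=
  ∃ e : KT N l ≃ KT N l', e 0 = 0 ∧ (∀ x, e (-x) = - e x) ∧ (∀ x y, e (x + y) = e x + e y) ∧
    (∀ x, e (KT.dd φ l x) = KT.dd ψ l' (e x)) ∧
    (∀ (W : AddSubgroup N) j x, e x ∈ KD W l' j ↔ x ∈ KD W l j) ∧
    ∀ (g : N →+ N) x, e (KT.map g l x) = KT.map g l' (e x)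

theorem KIso.cons {φ : α → N →+ N} {ψ : β → N →+ N} {l : List α} {l' : List β}
    (h : KIso φ ψ l l') (a : α) (b : β) (hab : φ a = ψ b) : KIso φ ψ (a :: l) (b :: l') := by
  obtain ⟨e, h1, h2, h3, h4, h5, h6⟩ := h
  refine ⟨Equiv.prodCongr e e, KT.cons_eq h1 h1, ?_, ?_, ?_, ?_, ?_⟩
  · rintro ⟨x, y⟩; exact KT.cons_eq (h2 x) (h2 y)
  · rintro ⟨x, y⟩ ⟨x', y'⟩; exact KT.cons_eq (h3 x x') (h3 y y')
  · rintro ⟨x, y⟩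
    refine KT.cons_eq ?_ ?_
    · change e (KT.dd φ l x + KT.map (φ a) l y) = KT.dd ψ l' (e x) + KT.map (ψ b) l' (e y)
      rw [h3, h4, h6, hab]
    · change e (- KT.dd φ l y) = - KT.dd ψ l' (e y)
      rw [h2, h4]
  · rintro W j ⟨x, y⟩
    exact and_congr (h5 W j x) (h5 W _ y)
  · rintro g ⟨x, y⟩
    exact KT.cons_eq (h6 g x) (h6 g y)

theorem KIso.refl (φ : α → N →+ N) (l : List α) : KIso φ φ l l :=
  ⟨Equiv.refl _, rfl, fun _ => rfl, fun _ _ => rfl, fun _ => rfl, fun _ _ _ => Iff.rfl,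
    fun _ _ => rfl⟩

theorem KIso.mapl (φ : β → N →+ N) (h : α → β) (l : List α) :
    KIso (fun a => φ (h a)) φ l (l.map h) := by
  induction l with
  | nil => exact ⟨Equiv.refl _, rfl, fun _ => rfl, fun _ _ => rfl, fun _ => rfl,
      fun _ _ _ => Iff.rfl, fun _ _ => rfl⟩
  | cons a l ih => exact ih.cons a (h a) rfl

theorem KIso.perm (φ : α → N →+ N) {l l' : List α} (h : l.Perm l') : KIso φ φ l l' := by
  induction h with
  | nil => exact KIso.refl φ []
  | cons a _ ih => exact ih.cons a a rfl
  | swap a b l =>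
    let s : KT N (b :: a :: l) → KT N (a :: b :: l) :=
      fun x => ((x.1.1, x.2.1), (x.1.2, - x.2.2))
    let t : KT N (a :: b :: l) → KT N (b :: a :: l) :=
      fun x => ((x.1.1, x.2.1), (x.1.2, - x.2.2))
    refine ⟨⟨s, t, ?_, ?_⟩, ?_, ?_, ?_, ?_, ?_, ?_⟩
    · rintro ⟨⟨x, y⟩, ⟨z, w⟩⟩
      change (((x, y), (z, - - w)) : (KT N l × KT N l) × (KT N l × KT N l)) = _
      rw [neg_neg]; rfl
    · rintro ⟨⟨x, y⟩, ⟨z, w⟩⟩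
      change (((x, y), (z, - - w)) : (KT N l × KT N l) × (KT N l × KT N l)) = _
      rw [neg_neg]; rfl
    · change (((0, 0), (0, - 0)) : (KT N l × KT N l) × (KT N l × KT N l)) = ((0, 0), (0, 0))
      rw [neg_zero]
    · rintro ⟨⟨x, y⟩, ⟨z, w⟩⟩; rfl
    · rintro ⟨⟨x, y⟩, ⟨z, w⟩⟩ ⟨⟨x', y'⟩, ⟨z', w'⟩⟩
      change (((x + x', z + z'), (y + y', - (w + w'))) : (KT N l × KT N l) × (KT N l × KT N l))
        = ((x + x', z + z'), (y + y', - w + - w'))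
      rw [neg_add]
    · rintro ⟨⟨x, y⟩, ⟨z, w⟩⟩
      change (((KT.dd φ l x + KT.map (φ a) l y + KT.map (φ b) l z,
          - (KT.dd φ l z + KT.map (φ a) l w)),
        (- KT.dd φ l y + KT.map (φ b) l w, - - - KT.dd φ l w)) :
          (KT N l × KT N l) × (KT N l × KT N l))
        = ((KT.dd φ l x + KT.map (φ b) l z + KT.map (φ a) l y,
            - KT.dd φ l z + KT.map (φ a) l (- w)),
          (- (KT.dd φ l y + KT.map (φ b) l (- w)), - - KT.dd φ l (- w)))
      simp only [_root_.map_neg]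
      refine Prod.ext (Prod.ext ?_ ?_) (Prod.ext ?_ ?_)
      · change _ + _ + _ = _ + _ + _; abel
      · change - (_ + _) = - _ + - _; abel
      · change - _ + _ = - (_ + - _); abel
      · rfl
    · rintro W j ⟨⟨x, y⟩, ⟨z, w⟩⟩
      change ((x ∈ KD W l j ∧ z ∈ KD W l (j - 1)) ∧ (y ∈ KD W l (j - 1) ∧ - w ∈ KD W l (j - 1 - 1)))
        ↔ ((x ∈ KD W l j ∧ y ∈ KD W l (j - 1)) ∧ (z ∈ KD W l (j - 1) ∧ w ∈ KD W l (j - 1 - 1)))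
      rw [neg_mem_iff]; tauto
    · rintro g ⟨⟨x, y⟩, ⟨z, w⟩⟩
      change (((KT.map g l x, KT.map g l z), (KT.map g l y, - KT.map g l w)) :
          (KT N l × KT N l) × (KT N l × KT N l))
        = ((KT.map g l x, KT.map g l z), (KT.map g l y, KT.map g l (- w)))
      rw [_root_.map_neg]
  | trans _ _ ih1 ih2 =>
    obtain ⟨e, h1, h2, h3, h4, h5, h6⟩ := ih1
    obtain ⟨f, k1, k2, k3, k4, k5, k6⟩ := ih2
    refine ⟨e.trans f, ?_, ?_, ?_, ?_, ?_, ?_⟩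
    · simp [h1, k1]
    · simp [h2, k2]
    · simp [h3, k3]
    · simp [h4, k4]
    · intro W j x
      simp only [Equiv.trans_apply]
      rw [k5, h5]
    · simp [h6, k6]

variable {B : Type} [CommRing B]

/-- multiplication operators -/
noncomputable def mu (φ : α → B) : α → B →+ B := fun a => AddMonoidHom.mulLeft (φ a)

theorem mu_comm (φ : α → B) (a b : α) (x : B) : mu φ a (mu φ b x) = mu φ b (mu φ a x) :=
  mul_left_comm _ _ _

/-- scaling -/
noncomputable def sc (b : B) (l : List α) : KT B l →+ KT B l := KT.map (AddMonoidHom.mulLeft b) l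

theorem sc_sc (b c : B) (l : List α) (x : KT B l) : sc b l (sc c l x) = sc (b * c) l x := by
  unfold sc
  rw [KT.map_map]; congr 1; congr 1; ext z
  exact (mul_assoc _ _ _).symm

theorem sc_comm (b c : B) (l : List α) (x : KT B l) : sc b l (sc c l x) = sc c l (sc b l x) := by
  rw [sc_sc, sc_sc, mul_comm]

theorem sc_one (l : List α) (x : KT B l) : sc 1 l x = x := by
  have : (AddMonoidHom.mulLeft (1 : B)) = AddMonoidHom.id B := by ext z; exact one_mul z
  unfold sc; rw [this, KT.map_id]

theorem sc_add (b c : B) (l : List α) (x : KT B l) : sc (b + c) l x = sc b l x + sc c l x := by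
  unfold sc
  rw [← KT.map_add']; congr 1; congr 1; ext z
  exact add_mul _ _ _

theorem sc_zero (l : List α) (x : KT B l) : sc 0 l x = 0 := by
  have : (AddMonoidHom.mulLeft (0 : B)) = 0 := by ext z; exact zero_mul z
  unfold sc; rw [this, KT.map_zero']

theorem sc_dd (b : B) (φ : α → B) (l : List α) (x : KT B l) :
    sc b l (KT.dd (mu φ) l x) = KT.dd (mu φ) l (sc b l x) :=
  KT.map_dd _ _ _ _ (fun a _ x => mul_left_comm _ _ _) x

theorem sc_mem (b : B) {l : List α} {j : ℤ} {x : KT B l} (hx : x ∈ KD ⊤ l j) :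
    sc b l x ∈ KD ⊤ l j := KD_map (fun _ _ => AddSubgroup.mem_top _) hx

theorem dd_mem {φ : α → B} {l : List α} {j : ℤ} {x : KT B l} (hx : x ∈ KD ⊤ l j) :
    KT.dd (mu φ) l x ∈ KD ⊤ l (j - 1) := KD_dd (fun _ _ _ _ => AddSubgroup.mem_top _) hx

/-- torsion homology in degrees `> c` -/
def LZ (M : Submonoid B) (φ : α → B) (l : List α) (c : ℤ) : Prop :=
  ∀ i > c, ∀ z ∈ KD (⊤ : AddSubgroup B) l i, KT.dd (mu φ) l z = 0 →
    ∃ s ∈ M, ∃ w ∈ KD (⊤ : AddSubgroup B) l (i + 1), KT.dd (mu φ) l w = sc s l z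

theorem LZ_cons_aux {M : Submonoid B} {φ : α → B} {l : List α} {c : ℤ} (h : LZ M φ l c)
    (a : α) {i : ℤ} (hi : i > c) {x y : KT B l}
    (hx : x ∈ KD ⊤ l i)
    (hd : KT.dd (mu φ) l x + sc (φ a) l y = 0)
    (hy : ∃ s ∈ M, ∃ w ∈ KD (⊤ : AddSubgroup B) l i, KT.dd (mu φ) l w = sc s l y) :
    ∃ s ∈ M, ∃ w ∈ KD (⊤ : AddSubgroup B) (a :: l) (i + 1),
      KT.dd (mu φ) (a :: l) w = sc s (a :: l) (x, y) := by
  obtain ⟨s, hs, w, hw, e⟩ := hy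
  obtain ⟨s', hs', v, hv, e'⟩ := h i hi (sc s l x + sc (φ a) l w)
    (add_mem (sc_mem _ hx) (sc_mem _ hw)) (by
      rw [_root_.map_add, ← sc_dd, ← sc_dd, e, sc_comm, ← _root_.map_add, hd, _root_.map_zero])
  refine ⟨s' * s, M.mul_mem hs' hs, (v, - sc s' l w), KD_cons.2 ⟨hv, ?_⟩, ?_⟩
  · rw [add_sub_cancel_right]; exact neg_mem (sc_mem _ hw)
  · rw [KT.dd_cons]
    refine KT.cons_eq ?_ ?_
    · rw [e']
      change _ + sc (φ a) l (- sc s' l w) = sc (s' * s) l x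
      rw [_root_.map_add, _root_.map_neg, sc_comm (φ a) s', sc_sc]; abel
    · change _ = sc (s' * s) l y
      rw [_root_.map_neg, neg_neg, ← sc_dd, e, sc_sc]

theorem LZ_cons {M : Submonoid B} {φ : α → B} {l : List α} {c : ℤ} (h : LZ M φ l c) (a : α) :
    LZ M φ (a :: l) (c + 1) := by
  rintro i hi ⟨x, y⟩ hz hd
  rw [KT.dd_cons] at hd
  obtain ⟨h1, h2⟩ := KT.cons_inj hd
  refine LZ_cons_aux h a (by omega) hz.1 h1 ?_
  have := h (i - 1) (by omega) y hz.2 (neg_eq_zero.1 h2)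
  rwa [sub_add_cancel] at this

theorem LZ_append {M : Submonoid B} {φ : α → B} {l : List α} {c : ℤ} (h : LZ M φ l c)
    (l' : List α) : LZ M φ (l' ++ l) (c + l'.length) := by
  induction l' with
  | nil => simpa using h
  | cons a l' ih =>
    have := LZ_cons ih a
    simpa [add_assoc] using this

/-- locally regular list -/
def LR (M : Submonoid B) : List B → Prop
  | [] => True
  | a :: l => LR M l ∧ ∀ b, a * b ∈ Ideal.span {x | x ∈ l} →
      ∃ s ∈ M, s * b ∈ Ideal.span {x | x ∈ l}

theorem exists_of_mem_span (l : List B) (b : B) (hb : b ∈ Ideal.span {x | x ∈ l}) :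
    ∃ w ∈ KD (⊤ : AddSubgroup B) l 1, KT.dd (mu id) l w = KT.inj l b := by
  induction hb using Submodule.span_induction with
  | mem x hx =>
    obtain ⟨e, h1, h2, -, -, -, h6⟩ := KT_homotopy (mu (id : B → B)) (mu_comm _) l x hx
    refine ⟨e (KT.inj l 1), h6 _ 0 _ (KD_inj trivial), ?_⟩
    have := h1 (KT.inj l 1)
    rw [KT.dd_inj, h2, add_zero, KT.map_inj] at this
    rw [this]; congr 1; exact mul_one x
  | zero => exact ⟨0, zero_mem _, by simp⟩
  | add x y _ _ hx hy =>
    obtain ⟨u, hu, e⟩ := hx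
    obtain ⟨v, hv, e'⟩ := hy
    exact ⟨u + v, add_mem hu hv, by simp [e, e']⟩
  | smul a x _ hx =>
    obtain ⟨u, hu, e⟩ := hx
    refine ⟨sc a l u, sc_mem _ hu, ?_⟩
    rw [← sc_dd, e]; exact KT.map_inj _ _ _

theorem LR_LZ {M : Submonoid B} {l : List B} (h : LR M l) : LZ M id l 0 := by
  induction l with
  | nil => intro i hi z hz _; exact ⟨1, M.one_mem, 0, zero_mem _, by
      rw [KD_big (by simpa using hi) hz, _root_.map_zero, _root_.map_zero]⟩
  | cons a l ih =>
    have h0 := ih h.1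
    rintro i hi ⟨x, y⟩ hz hd
    by_cases hi1 : i = 1
    · subst hi1
      rw [KT.dd_cons] at hd
      obtain ⟨h1, h2⟩ := KT.cons_inj hd
      refine LZ_cons_aux h0 a (by omega) hz.1 h1 ?_
      have hy := hz.2
      change y ∈ KD ⊤ l (1 - 1) at hy
      rw [sub_self] at hy
      obtain ⟨-, hy⟩ := KD_zero hy
      set y0 := KT.pr0 l y
      have hay : a * y0 ∈ Ideal.span {x | x ∈ l} := by
        have h3 := KT_pr0_dd (mu (id : B → B)) ⊤ l
          (Ideal.span {x | x ∈ l} : Ideal B).toAddSubgroup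
          (fun b hb x _ => Ideal.mul_mem_right _ _ (Ideal.subset_span hb)) x hz.1
        rw [eq_neg_of_add_eq_zero_left h1, hy, KT.map_inj, _root_.map_neg, KT.pr0_inj] at h3
        have h4 : -(a * y0) ∈ Ideal.span {x | x ∈ l} := h3
        exact neg_mem_iff.1 h4
      obtain ⟨s, hs, hs'⟩ := h.2 y0 hay
      obtain ⟨w, hw, e⟩ := exists_of_mem_span l _ hs'
      refine ⟨s, hs, w, hw, ?_⟩
      rw [e, hy]; exact (KT.map_inj (AddMonoidHom.mulLeft s) l y0).symm
    · exact LZ_cons h0 a i (by omega) (x, y) hz hd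

theorem LZ_iso {α β : Type} {φ : α → B} {ψ : β → B} {l : List α} {l' : List β}
    (h : KIso (mu φ) (mu ψ) l l')
    {M : Submonoid B} {c : ℤ} (hl : LZ M ψ l' c) : LZ M φ l c := by
  obtain ⟨e, h1, h2, h3, h4, h5, h6⟩ := h
  intro i hi z hz hd
  obtain ⟨s, hs, w, hw, ew⟩ := hl i hi (e z) ((h5 _ _ _).2 hz) (by rw [← h4, hd, h1])
  refine ⟨s, hs, e.symm w, (h5 _ _ _).1 (by simpa using hw), ?_⟩
  apply e.injective
  rw [h4, e.apply_symm_apply, ew]; exact (h6 _ _).symm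

/-- `u` is a cycle of degree `q` whose class has annihilator "prime" `P`. -/
def AssCyc (P : Ideal B) (l : List B) (q : ℤ) : Prop :=
  ∃ u ∈ KD (⊤ : AddSubgroup B) l q, KT.dd (mu id) l u = 0 ∧
    (∀ s, s ∉ P → ¬ ∃ w ∈ KD (⊤ : AddSubgroup B) l (q + 1), KT.dd (mu id) l w = sc s l u) ∧
    (∀ p ∈ P, ∃ w ∈ KD (⊤ : AddSubgroup B) l (q + 1), KT.dd (mu id) l w = sc p l u)

theorem AssCyc.cons {P : Ideal B} {l : List B} {q : ℤ} (h : AssCyc P l q)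
    (hz : LZ ⊥ id l q) {g : B} (hg : g ∈ P) : AssCyc P (g :: l) (q + 1) := by
  obtain ⟨u, hu, hd, h1, h2⟩ := h
  obtain ⟨w, hw, e⟩ := h2 g hg
  refine ⟨(-w, u), KD_cons.2 ⟨neg_mem hw, by rwa [add_sub_cancel_right]⟩, ?_, ?_, ?_⟩
  · rw [KT.dd_cons, hd]
    refine KT.cons_eq ?_ ?_
    · rw [_root_.map_neg, e]; exact neg_add_cancel _
    · exact neg_zero
  · rintro s hs ⟨⟨x, y⟩, hxy, e'⟩
    rw [KT.dd_cons] at e'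
    obtain ⟨-, e2⟩ := KT.cons_inj e'
    refine h1 s hs ⟨-y, ?_, ?_⟩
    · have := hxy.2
      change y ∈ KD ⊤ l (q + 1 + 1 - 1) at this
      rw [add_sub_cancel_right] at this
      exact neg_mem this
    · rw [_root_.map_neg, e2]; rfl
  · intro p hp
    obtain ⟨v, hv, ev⟩ := h2 p hp
    obtain ⟨s, hs, t, ht, et⟩ := hz (q + 1) (by omega) (- sc p l w + sc g l v)
      (add_mem (neg_mem (sc_mem _ hw)) (sc_mem _ hv)) (by
        rw [_root_.map_add, _root_.map_neg, ← sc_dd, ← sc_dd, e, ev, sc_comm]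
        exact neg_add_cancel _)
    rw [Submonoid.mem_bot.1 hs, sc_one] at et
    refine ⟨(t, -v), KD_cons.2 ⟨ht, by rw [add_sub_cancel_right]; exact neg_mem hv⟩, ?_⟩
    rw [KT.dd_cons]
    refine KT.cons_eq ?_ ?_
    · rw [et]
      change _ + sc g l (- v) = sc p l (- w)
      rw [_root_.map_neg, _root_.map_neg]; abel
    · rw [_root_.map_neg, neg_neg, ev]; rfl

theorem AssCyc.append {P : Ideal B} {l : List B} {q : ℤ} (h : AssCyc P l q)
    (hz : LZ ⊥ id l q) (g : List B) (hg : ∀ a ∈ g, a ∈ P) :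
    AssCyc P (g ++ l) (q + g.length) := by
  induction g with
  | nil => simpa using h
  | cons a g ih =>
    have h1 := ih (fun b hb => hg b (List.mem_cons_of_mem a hb))
    have := h1.cons (LZ_append hz g) (hg a List.mem_cons_self)
    simpa [add_assoc] using this

theorem exists_AssCyc [IsNoetherianRing B] {l : List B} {q : ℤ} (u : KT B l)
    (hu : u ∈ KD (⊤ : AddSubgroup B) l q) (hd : KT.dd (mu id) l u = 0)
    (hn : ¬ ∃ w ∈ KD (⊤ : AddSubgroup B) l (q + 1), KT.dd (mu id) l w = u) :
    ∃ P : Ideal B, P.IsPrime ∧ AssCyc P l q := by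
  let an (z : KT B l) : Ideal B :=
    { carrier := {b | ∃ w ∈ KD (⊤ : AddSubgroup B) l (q + 1), KT.dd (mu id) l w = sc b l z}
      zero_mem' := ⟨0, zero_mem _, by rw [sc_zero, _root_.map_zero]⟩
      add_mem' := by
        rintro a b ⟨w, hw, e⟩ ⟨w', hw', e'⟩
        exact ⟨w + w', add_mem hw hw', by rw [sc_add, _root_.map_add, e, e']⟩
      smul_mem' := by
        rintro c b ⟨w, hw, e⟩
        exact ⟨sc c l w, sc_mem _ hw, by rw [← sc_dd, e, sc_sc]; rfl⟩ }
  let Z : Set (Ideal B) := {J | ∃ z ∈ KD (⊤ : AddSubgroup B) l q, KT.dd (mu id) l z = 0 ∧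
    (1 : B) ∉ an z ∧ an z = J}
  have hZ : Z.Nonempty := ⟨an u, u, hu, hd, by
    rintro ⟨w, hw, e⟩; exact hn ⟨w, hw, by rw [e, sc_one]⟩, rfl⟩
  obtain ⟨J, ⟨z, hz, hdz, h1, rfl⟩, hmax⟩ := set_has_maximal_iff_noetherian.2 ‹_› Z hZ
  refine ⟨an z, ⟨fun h => h1 (h ▸ trivial), ?_⟩, z, hz, hdz, fun s hs h => hs h, fun p hp => hp⟩
  intro x y hxy
  by_contra hcon
  push Not at hcon
  obtain ⟨hx, hy⟩ := hcon
  have hyz : an (sc y l z) ∈ Z := by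
    refine ⟨sc y l z, sc_mem _ hz, by rw [← sc_dd, hdz, _root_.map_zero], ?_, rfl⟩
    rintro ⟨w, hw, e⟩
    exact hy ⟨w, hw, by rw [e, sc_one]⟩
  refine hmax _ hyz (lt_of_le_of_ne ?_ ?_)
  · rintro b ⟨w, hw, e⟩
    exact ⟨sc y l w, sc_mem _ hw, by rw [← sc_dd, e, sc_comm]⟩
  · intro h
    apply hx
    rw [h]
    obtain ⟨w, hw, e⟩ := hxy
    exact ⟨w, hw, by rw [e, sc_sc]⟩

theorem AssCyc.mem {P : Ideal B} (hP : P.IsPrime) {l : List B} {q : ℤ} (h : AssCyc P l q)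
    (a : B) (ha : a ∈ l) : a ∈ P := by
  obtain ⟨u, hu, hd, h1, h2⟩ := h
  by_contra hcon
  refine h1 a hcon ?_
  obtain ⟨e, k1, k2, -, -, -, k6⟩ := KT_homotopy (mu (id : B → B)) (mu_comm _) l a ha
  refine ⟨e u, k6 _ _ _ hu, ?_⟩
  have := k1 u
  rw [hd, k2, add_zero] at this
  exact this

theorem koszul_vanish [IsNoetherianRing B] (l : List B)
    (hreg : ∀ P : Ideal B, ∀ _ : P.IsPrime, (∀ a ∈ l, a ∈ P) → ∃ g : List B,
      l.length ≤ g.length + 1 ∧ (∀ a ∈ g, a ∈ P) ∧ LR P.primeCompl g) :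
    LZ ⊥ id l 1 := by
  have key : ∀ k : ℕ, ∀ c : ℤ, 1 ≤ c → l.length ≤ c + k → LZ ⊥ id l c := by
    intro k
    induction k with
    | zero =>
      intro c _ hc i hi z hz _
      exact ⟨1, Submonoid.one_mem _, 0, zero_mem _, by
        rw [KD_big (by push_cast at hc; omega) hz, _root_.map_zero, _root_.map_zero]⟩
    | succ k ih =>
      intro c hc1 hc
      have h1 := ih (c + 1) (by omega) (by push_cast at hc ⊢; omega)
      intro i hi z hz hd
      by_cases hic : i > c + 1
      · exact h1 i hic z hz hd
      · obtain rfl : i = c + 1 := by omega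
        by_contra hcon
        obtain ⟨P, hP, hA⟩ := exists_AssCyc z hz hd (by
          rintro ⟨w, hw, e⟩
          exact hcon ⟨1, Submonoid.one_mem _, w, hw, by rw [e, sc_one]⟩)
        obtain ⟨g, hg1, hg2, hg3⟩ := hreg P hP (hA.mem hP)
        obtain ⟨u, hu, hdu, k1, -⟩ := hA.append h1 g hg2
        have h2 := LZ_iso (KIso.perm (mu id) (List.perm_append_comm (l₁ := g) (l₂ := l)))
          (LZ_append (LR_LZ hg3) l)
        obtain ⟨s, hs, w, hw, e⟩ := h2 _ (by omega) u hu hdu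
        exact k1 s hs ⟨w, hw, e⟩
  exact key l.length 1 le_rfl (by omega)

end KosB

section Ht

theorem ht_aux_max {R : Type} [CommRing R] [IsNoetherianRing R] (p : Ideal R) [p.IsMaximal]
    (P : Ideal (Polynomial R)) [P.IsPrime] [P.LiesOver p] : P.height ≤ p.height + 1 := by
  let _ : Field (R ⧸ p) := Ideal.Quotient.field p
  suffices h : (P.map (Ideal.Quotient.mk
      (Ideal.map (algebraMap R (Polynomial R)) p))).height ≤ 1 by
    rw [Ideal.height_eq_height_add_of_liesOver_of_hasGoingDown p]
    gcongr
  let e : (Polynomial R ⧸ (p.map (algebraMap R (Polynomial R)))) ≃+* Polynomial (R ⧸ p) :=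
    (Ideal.polynomialQuotientEquivQuotientPolynomial p).symm
  let P' : Ideal (Polynomial (R ⧸ p)) :=
    Ideal.map e <| P.map (Ideal.Quotient.mk <| p.map (algebraMap R (Polynomial R)))
  have : (P.map (Ideal.Quotient.mk <| p.map (algebraMap R (Polynomial R)))).IsPrime := by
    refine Ideal.map_isPrime_of_surjective Ideal.Quotient.mk_surjective ?_
    rw [Ideal.mk_ker, Ideal.LiesOver.over (P := P) (p := p)]
    exact Ideal.map_comap_le
  have : P'.IsPrime := Ideal.map_isPrime_of_equiv e
  have h1 : P'.height ≤ 1 := by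
    have h2 := P'.height_le_ringKrullDim_of_isPrime
    have h3 : ringKrullDim (Polynomial (R ⧸ p)) ≤ 1 :=
      (Ring.krullDimLE_iff (n := 1)).1 inferInstance
    exact_mod_cast h2.trans h3
  rwa [← e.height_map <| P.map (Ideal.Quotient.mk <| p.map (algebraMap R (Polynomial R)))]

open Ideal IsLocalization Polynomial in
attribute [local instance] Polynomial.algebra Polynomial.isLocalization in
theorem ht_aux {R : Type} [CommRing R] [IsNoetherianRing R] (p : Ideal R)
    (P : Ideal (Polynomial R)) [P.IsPrime] [P.LiesOver p] : P.height ≤ p.height + 1 := by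
  have : p.IsPrime := by rw [P.over_def p]; infer_instance
  let Rₚ := Localization.AtPrime p
  set p' : Ideal Rₚ := p.map (algebraMap R Rₚ) with p'_def
  have : p'.IsMaximal := by
    rw [p'_def, Localization.AtPrime.map_eq_maximalIdeal]
    exact IsLocalRing.maximalIdeal.isMaximal Rₚ
  let P' : Ideal Rₚ[X] := P.map (algebraMap R[X] Rₚ[X])
  have disj : Disjoint (p.primeCompl.map C : Set R[X]) P := by
    refine Set.disjoint_left.mpr fun a ⟨b, hb⟩ ha ↦ hb.1 ?_
    rwa [SetLike.mem_coe, LiesOver.over (P := P) (p := p), mem_comap, algebraMap_eq, hb.2]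
  have : P'.IsPrime := IsLocalization.isPrime_of_isPrime_disjoint (p.primeCompl.map C) _ _
    ‹P.IsPrime› disj
  have : P'.LiesOver p' := liesOver_of_isPrime_of_disjoint p.primeCompl _ _ disj
  have eq1 : p.height = p'.height := by
    rw [height_map_of_disjoint p.primeCompl]
    exact Disjoint.symm <| Set.disjoint_left.mpr fun _ a b ↦ b a
  have eq2 : P.height = P'.height := by
    rw [height_map_of_disjoint (Submonoid.map C <| p.primeCompl) _ disj]
  rw [eq1, eq2]
  apply ht_aux_max p' P'

theorem ht_eq {R : Type} [CommRing R] [IsNoetherianRing R] (p : Ideal R) [p.IsPrime]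
    (P : Ideal (Polynomial R)) [P.IsPrime] [P.LiesOver p] (h : P = p.map Polynomial.C) :
    P.height = p.height := by
  subst h
  rw [Ideal.height_eq_height_add_of_liesOver_of_hasGoingDown p]
  have : (Ideal.map (algebraMap R (Polynomial R)) p).IsPrime := ‹_›
  simp

/-- every prime has a long locally regular sequence -/
def HasSeq (A : Type) [CommRing A] : Prop := ∀ P : Ideal A, ∀ _ : P.IsPrime,
  ∃ g : List A, (∀ a ∈ g, a ∈ P) ∧ LR P.primeCompl g ∧ P.height ≤ g.length

theorem span_list_map {A A' : Type} [CommRing A] [CommRing A'] (φ : A →+* A') (l : List A) :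
    Ideal.span {x | x ∈ l.map φ} = (Ideal.span {x | x ∈ l}).map φ := by
  rw [Ideal.map_span]
  congr 1
  ext x
  simp

theorem LR_equiv {A A' : Type} [CommRing A] [CommRing A'] (e : A ≃+* A') (P : Ideal A')
    [P.IsPrime] (l : List A) (h : LR (P.comap e).primeCompl l) :
    LR P.primeCompl (l.map e) := by
  induction l with
  | nil => trivial
  | cons a l ih =>
    refine ⟨ih h.1, ?_⟩
    intro b hb
    have e1 : Ideal.span {x | x ∈ l.map e} = (Ideal.span {x | x ∈ l}).map (e : A →+* A') :=
      span_list_map (e : A →+* A') l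
    have key : ∀ x : A, e x ∈ Ideal.span {x | x ∈ l.map e} ↔ x ∈ Ideal.span {x | x ∈ l} := by
      intro x
      rw [e1]
      constructor
      · intro hx
        obtain ⟨y, hy, hxy⟩ := (Ideal.mem_map_iff_of_surjective (e : A →+* A') e.surjective).1 hx
        rwa [← e.injective hxy]
      · intro hx; exact Ideal.mem_map_of_mem (e : A →+* A') hx
    obtain ⟨b, rfl⟩ := e.surjective b
    rw [← _root_.map_mul] at hb
    obtain ⟨s, hs, hs'⟩ := h.2 b ((key _).1 hb)
    refine ⟨e s, fun h => hs h, ?_⟩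
    rw [← _root_.map_mul]
    exact (key _).2 hs'

theorem HasSeq.equiv {A A' : Type} [CommRing A] [CommRing A'] (e : A ≃+* A') (h : HasSeq A) :
    HasSeq A' := by
  intro P hP
  obtain ⟨g, h1, h2, h3⟩ := h (P.comap e) inferInstance
  refine ⟨g.map e, ?_, LR_equiv e P g h2, ?_⟩
  · intro a ha
    obtain ⟨b, hb, rfl⟩ := List.mem_map.1 ha
    exact h1 b hb
  · rw [e.height_comap] at h3
    simpa using h3

theorem HasSeq.field (K : Type) [Field K] : HasSeq K := by
  intro P hP
  refine ⟨[], by simp, trivial, ?_⟩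
  have : P = ⊥ := (Ideal.eq_bot_or_top P).resolve_right hP.ne_top
  subst this
  simp

open Polynomial in
theorem LR_poly {A : Type} [CommRing A] (P : Ideal A[X]) [P.IsPrime] (l : List A)
    (h : LR (P.comap C).primeCompl l) : LR P.primeCompl (l.map C) := by
  induction l with
  | nil => trivial
  | cons a l ih =>
    refine ⟨ih h.1, ?_⟩
    intro b hb
    rw [span_list_map, Ideal.mem_map_C_iff] at hb
    have hb' : ∀ n, ∃ s ∈ (P.comap C).primeCompl, s * b.coeff n ∈ Ideal.span {x | x ∈ l} := by
      intro n
      have := hb n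
      rw [coeff_C_mul] at this
      exact h.2 _ this
    choose s hs hs' using hb'
    refine ⟨C (∏ n ∈ b.support, s n), ?_, ?_⟩
    · have : (∏ n ∈ b.support, s n) ∈ (P.comap C).primeCompl :=
        Submonoid.prod_mem _ (fun n _ => hs n)
      exact fun h => this h
    · rw [span_list_map, Ideal.mem_map_C_iff]
      intro n
      rw [coeff_C_mul]
      by_cases hn : n ∈ b.support
      · rw [← Finset.prod_erase_mul _ _ hn, mul_assoc]
        exact Ideal.mul_mem_left _ _ (hs' n)
      · rw [notMem_support_iff.1 hn, mul_zero]; exact zero_mem _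

open Polynomial in
theorem lead_reg {A : Type} [CommRing A] (p : Ideal A) [p.IsPrime] (J : Ideal A) (G : A[X])
    (hG : G.leadingCoeff ∉ p) (k : ℕ) : ∀ b : A[X], b.support.card ≤ k → G * b ∈ J.map C →
    ∃ s ∉ p, C s * b ∈ J.map C := by
  induction k with
  | zero =>
    intro b hb _
    have : b = 0 := by simpa using hb
    exact ⟨1, p.ne_top_iff_one.1 (Ideal.IsPrime.ne_top ‹_›), by rw [this, mul_zero]; exact zero_mem _⟩
  | succ k ih =>
    intro b hb hGb
    have h1 : G.leadingCoeff * b.leadingCoeff ∈ J := by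
      rw [← coeff_mul_degree_add_degree]
      exact Ideal.mem_map_C_iff.1 hGb _
    have h2 : C G.leadingCoeff * b = C G.leadingCoeff * b.eraseLead +
        C (G.leadingCoeff * b.leadingCoeff) * X ^ b.natDegree := by
      conv_lhs => rw [← b.eraseLead_add_C_mul_X_pow]
      rw [C_mul]; ring
    have h3 : C (G.leadingCoeff * b.leadingCoeff) * X ^ b.natDegree ∈ J.map C :=
      Ideal.mul_mem_right _ _ (Ideal.mem_map_of_mem _ h1)
    obtain ⟨s, hs, hs'⟩ := ih (C G.leadingCoeff * b.eraseLead) (by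
        by_cases hb0 : b = 0
        · simp [hb0]
        · have := eraseLead_support_card_lt hb0
          have h4 : (C G.leadingCoeff * b.eraseLead).support.card ≤ b.eraseLead.support.card := by
            apply Finset.card_le_card
            intro n hn
            rw [mem_support_iff, coeff_C_mul] at hn
            exact mem_support_iff.2 (right_ne_zero_of_mul hn)
          omega) (by
        have : G * (C G.leadingCoeff * b.eraseLead) = C G.leadingCoeff * (G * b) -
          G * (C (G.leadingCoeff * b.leadingCoeff) * X ^ b.natDegree) := by
          rw [eq_sub_iff_add_eq, ← mul_add, ← h2]; ring
        rw [this]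
        exact sub_mem (Ideal.mul_mem_left _ _ hGb) (Ideal.mul_mem_left _ _ h3))
    refine ⟨s * G.leadingCoeff, fun h => ?_, ?_⟩
    · rcases (Ideal.IsPrime.mem_or_mem ‹_› h) with h | h
      · exact hs h
      · exact hG h
    · rw [C_mul, mul_assoc, h2, mul_add]
      exact add_mem hs' (Ideal.mul_mem_left _ _ h3)

open Polynomial in
theorem exists_lead {A : Type} [CommRing A] (P : Ideal A[X]) [P.IsPrime]
    (h : P ≠ (P.comap C).map C) : ∃ G ∈ P, G.leadingCoeff ∉ P.comap C := by
  by_contra hcon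
  push Not at hcon
  apply h
  refine le_antisymm ?_ Ideal.map_comap_le
  have : ∀ k, ∀ G ∈ P, G.support.card ≤ k → G ∈ (P.comap C).map C := by
    intro k
    induction k with
    | zero =>
      intro b _ hb
      have : b = 0 := by simpa using hb
      rw [this]; exact zero_mem _
    | succ k ih =>
      intro b hbP hb
      by_cases hb0 : b = 0
      · rw [hb0]; exact zero_mem _
      · have h1 : C b.leadingCoeff * X ^ b.natDegree ∈ (P.comap C).map C :=
          Ideal.mul_mem_right _ _ (Ideal.mem_map_of_mem _ (hcon b hbP))
        have h2 := eraseLead_support_card_lt hb0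
        have h3 : b.eraseLead = b - C b.leadingCoeff * X ^ b.natDegree := by
          rw [eq_sub_iff_add_eq, eraseLead_add_C_mul_X_pow]
        have h4 := ih b.eraseLead (by
          rw [h3]; exact sub_mem hbP (Ideal.map_comap_le h1)) (by omega)
        rw [← b.eraseLead_add_C_mul_X_pow]
        exact add_mem h4 h1
  exact fun G hG => this _ G hG le_rfl

open Polynomial in
theorem HasSeq.poly {A : Type} [CommRing A] [IsNoetherianRing A] (h : HasSeq A) :
    HasSeq A[X] := by
  intro P hP
  obtain ⟨g, h1, h2, h3⟩ := h (P.comap C) inferInstance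
  have : P.LiesOver (P.comap C) := ⟨rfl⟩
  have hgP : ∀ a ∈ g.map C, a ∈ P := by
    intro a ha
    obtain ⟨b, hb, rfl⟩ := List.mem_map.1 ha
    exact h1 b hb
  by_cases hc : P = (P.comap C).map C
  · refine ⟨g.map C, hgP, LR_poly P g h2, ?_⟩
    rw [ht_eq (P.comap C) P hc]
    simpa using h3
  · obtain ⟨G, hG, hG'⟩ := exists_lead P hc
    refine ⟨G :: g.map C, ?_, ⟨LR_poly P g h2, ?_⟩, ?_⟩
    · intro a ha
      rcases List.mem_cons.1 ha with rfl | ha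
      · exact hG
      · exact hgP a ha
    · intro b hb
      rw [span_list_map] at hb ⊢
      obtain ⟨s, hs, hs'⟩ := lead_reg (P.comap C) _ G hG' _ b le_rfl hb
      exact ⟨C s, fun h => hs h, hs'⟩
    · refine (ht_aux (P.comap C) P).trans ?_
      simp only [List.length_cons, List.length_map, Nat.cast_add, Nat.cast_one]
      gcongr

theorem HasSeq.mv (K : Type) [Field K] (m : ℕ) : HasSeq (MvPolynomial (Fin m) K) := by
  induction m with
  | zero => exact (HasSeq.field K).equiv (MvPolynomial.isEmptyRingEquiv K (Fin 0)).symm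
  | succ m ih => exact (ih.poly).equiv (MvPolynomial.finSuccEquiv K m).symm.toRingEquiv

theorem koszul_ht (K : Type) [Field K] (m n : ℕ) (I : Ideal (MvPolynomial (Fin m) K))
    (f : Fin (n + 1) → MvPolynomial (Fin m) K) (hI : I = Ideal.span (Set.range f))
    (hht : ∀ P : Ideal (MvPolynomial (Fin m) K), ∀ _ : P.IsPrime, I ≤ P → (n : ℕ∞) ≤ P.height)
    (i : ℤ) (hi : 2 ≤ i) (z : KT (MvPolynomial (Fin m) K) (List.finRange (n + 1)))
    (hz : z ∈ KD ⊤ (List.finRange (n + 1)) i) (hd : KT.dd (mu f) (List.finRange (n + 1)) z = 0) :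
    ∃ w ∈ KD ⊤ (List.finRange (n + 1)) (i + 1), KT.dd (mu f) (List.finRange (n + 1)) w = z := by
  have h1 : LZ ⊥ id ((List.finRange (n + 1)).map f) 1 := by
    refine koszul_vanish _ ?_
    intro P hP hl
    obtain ⟨g, hg1, hg2, hg3⟩ := HasSeq.mv K m P hP
    refine ⟨g, ?_, hg1, hg2⟩
    have : I ≤ P := by
      rw [hI, Ideal.span_le]
      rintro _ ⟨j, rfl⟩
      exact hl _ (List.mem_map_of_mem (List.mem_finRange j))
    have := (hht P hP this).trans hg3
    simp only [List.length_map, List.length_finRange]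
    have : n ≤ g.length := by exact_mod_cast this
    omega
  have h2 : LZ ⊥ f (List.finRange (n + 1)) 1 :=
    LZ_iso (φ := f) (ψ := id) (KIso.mapl (mu id) f (List.finRange (n + 1))) h1
  obtain ⟨s, hs, w, hw, e⟩ := h2 i (by omega) z hz hd
  rw [Submonoid.mem_bot.1 hs, sc_one] at e
  exact ⟨w, hw, e⟩

end Ht

section SS
open MvPolynomial
set_option linter.unusedSectionVars false

variable {τ : Type} [DecidableEq τ] {B : Type} [CommRing B]

/-- `y`-degree `s` part -/
noncomputable def Sg (τ B : Type) [CommRing B] (s : ℤ) : AddSubgroup (MvPolynomial τ B) where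
  carrier := {p | ∀ w, coeff w p ≠ 0 → (w.degree : ℤ) = s}
  zero_mem' := by intro w h; exact absurd (coeff_zero w) h
  add_mem' := by
    intro p q hp hq w h
    rw [coeff_add] at h
    by_cases h1 : coeff w p = 0
    · rw [h1, zero_add] at h; exact hq w h
    · exact hp w h1
  neg_mem' := by
    intro p hp w h
    rw [coeff_neg] at h
    exact hp w (neg_ne_zero.1 h)

theorem Sg_coeff {s : ℤ} {p : MvPolynomial τ B} (hp : p ∈ Sg τ B s) {w : τ →₀ ℕ}
    (hw : (w.degree : ℤ) ≠ s) : coeff w p = 0 := by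
  by_contra h; exact hw (hp w h)

theorem Sg_mul {s t : ℤ} {p q : MvPolynomial τ B} (hp : p ∈ Sg τ B s) (hq : q ∈ Sg τ B t) :
    p * q ∈ Sg τ B (s + t) := by
  intro w hw
  rw [coeff_mul] at hw
  obtain ⟨⟨a, b⟩, hab, h⟩ := Finset.exists_ne_zero_of_sum_ne_zero hw
  rw [Finset.HasAntidiagonal.mem_antidiagonal] at hab
  simp only at hab h
  rw [← hab, _root_.map_add, ← hp a (left_ne_zero_of_mul h), ← hq b (right_ne_zero_of_mul h)]
  push_cast; rfl

theorem Sg_monomial (w : τ →₀ ℕ) (b : B) : monomial w b ∈ Sg τ B (w.degree : ℤ) := by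
  intro v hv
  rw [coeff_monomial] at hv
  by_cases h : w = v
  · rw [h]
  · simp [h] at hv

theorem Sg_X (i : τ) : (X i : MvPolynomial τ B) ∈ Sg τ B 1 := by
  have := Sg_monomial (Finsupp.single i 1) (1 : B)
  rw [Finsupp.degree_single] at this
  exact this

theorem Sg_C (b : B) : (C b : MvPolynomial τ B) ∈ Sg τ B 0 := by
  have := Sg_monomial (0 : τ →₀ ℕ) b
  simpa using this

theorem Sg_X_mul {s : ℤ} (i : τ) {p : MvPolynomial τ B} (hp : p ∈ Sg τ B s) :
    X i * p ∈ Sg τ B (s + 1) := by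
  rw [add_comm]; exact Sg_mul (Sg_X i) hp

theorem Sg_neg {s : ℤ} (hs : s < 0) {p : MvPolynomial τ B} (hp : p ∈ Sg τ B s) : p = 0 := by
  ext w
  rw [coeff_zero]
  exact Sg_coeff hp (by omega)

/-- division by a variable -/
noncomputable def Td (i : τ) : MvPolynomial τ B →+ MvPolynomial τ B where
  toFun p := p.divMonomial (Finsupp.single i 1)
  map_zero' := zero_divMonomial _
  map_add' p q := add_divMonomial _ _ _

theorem coeff_Td (i : τ) (p : MvPolynomial τ B) (w : τ →₀ ℕ) :
    coeff w (Td i p) = coeff (Finsupp.single i 1 + w) p := coeff_divMonomial _ _ _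

theorem Td_X (i : τ) (p : MvPolynomial τ B) : Td i (X i * p) = p := X_mul_divMonomial i p

theorem Td_comm (i j : τ) (p : MvPolynomial τ B) : Td i (Td j p) = Td j (Td i p) := by
  ext w
  simp only [coeff_Td]
  rw [← add_assoc, ← add_assoc, add_comm (Finsupp.single j 1)]

theorem Td_X_ne {i j : τ} (h : i ≠ j) (p : MvPolynomial τ B) : Td i (X j * p) = X j * Td i p := by
  ext w
  rw [coeff_Td, coeff_X_mul', coeff_X_mul', coeff_Td]
  have h1 : j ∈ (Finsupp.single i 1 + w).support ↔ j ∈ w.support := by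
    simp [Finsupp.mem_support_iff, Finsupp.single_apply, h]
  by_cases hj : j ∈ w.support
  · rw [if_pos (h1.2 hj), if_pos hj]
    congr 1
    rw [add_tsub_assoc_of_le]
    rw [Finsupp.single_le_iff]
    rw [Finsupp.mem_support_iff] at hj
    omega
  · rw [if_neg (fun h => hj (h1.1 h)), if_neg hj]

theorem Td_mem {i : τ} {s : ℤ} {p : MvPolynomial τ B} (hp : p ∈ Sg τ B s) :
    Td i p ∈ Sg τ B (s - 1) := by
  intro w hw
  rw [coeff_Td] at hw
  have := hp _ hw
  rw [_root_.map_add, Finsupp.degree_single] at this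
  push_cast at this
  omega

theorem Td_ker {s : ℤ} (hs : s ≠ 0) {p : MvPolynomial τ B} (hp : p ∈ Sg τ B s)
    (h : ∀ i, Td i p = 0) : p = 0 := by
  ext w
  rw [coeff_zero]
  by_cases hw : w = 0
  · subst hw
    apply Sg_coeff hp
    simpa using hs.symm
  · obtain ⟨i, hi⟩ := Finsupp.ne_iff.1 hw
    have h1 := coeff_Td i p (w - Finsupp.single i 1)
    rw [h, coeff_zero, add_tsub_cancel_of_le] at h1
    · exact h1.symm
    · rw [Finsupp.single_le_iff]
      simp only [Finsupp.coe_zero, Pi.zero_apply] at hi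
      omega

/-- homogeneous component -/
noncomputable def hc (s : ℤ) : MvPolynomial τ B →+ MvPolynomial τ B :=
  if 0 ≤ s then (homogeneousComponent s.toNat).toAddMonoidHom else 0

theorem coeff_hc (s : ℤ) (p : MvPolynomial τ B) (w : τ →₀ ℕ) :
    coeff w (hc s p) = if (w.degree : ℤ) = s then coeff w p else 0 := by
  unfold hc
  by_cases hs : 0 ≤ s
  · rw [if_pos hs]
    change coeff w (homogeneousComponent s.toNat p) = _
    rw [coeff_homogeneousComponent]
    congr 1
    apply propext
    omega
  · rw [if_neg hs, if_neg (by omega)]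
    exact coeff_zero w

theorem hc_mem (s : ℤ) (p : MvPolynomial τ B) : hc s p ∈ Sg τ B s := by
  intro w hw
  rw [coeff_hc] at hw
  by_contra h
  simp [h] at hw

theorem hc_of_mem {s : ℤ} {p : MvPolynomial τ B} (hp : p ∈ Sg τ B s) : hc s p = p := by
  ext w
  rw [coeff_hc]
  split_ifs with h
  · rfl
  · exact (Sg_coeff hp h).symm

theorem hc_mul {s t : ℤ} (p : MvPolynomial τ B) {q : MvPolynomial τ B} (hq : q ∈ Sg τ B s) :
    hc (t + s) (p * q) = hc t p * q := by
  ext w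
  rw [coeff_hc, coeff_mul, coeff_mul]
  split_ifs with h
  · refine Finset.sum_congr rfl ?_
    rintro ⟨a, b⟩ hab
    rw [Finset.HasAntidiagonal.mem_antidiagonal] at hab
    simp only at hab ⊢
    rw [coeff_hc]
    by_cases hb : coeff b q = 0
    · rw [hb, mul_zero, mul_zero]
    · rw [if_pos]
      have := hq b hb
      rw [← hab, _root_.map_add] at h
      push_cast at h
      omega
  · symm
    refine Finset.sum_eq_zero ?_
    rintro ⟨a, b⟩ hab
    rw [Finset.HasAntidiagonal.mem_antidiagonal] at hab
    simp only at hab ⊢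
    rw [coeff_hc]
    by_cases hb : coeff b q = 0
    · rw [hb, mul_zero]
    · rw [if_neg, zero_mul]
      have := hq b hb
      rw [← hab, _root_.map_add] at h
      push_cast at h
      omega

theorem hc_fin (p : MvPolynomial τ B) : ∃ F : Finset ℤ, p = ∑ s ∈ F, hc s p := by
  refine ⟨p.support.image (fun w => (w.degree : ℤ)), ?_⟩
  ext w
  rw [coeff_sum]
  simp only [coeff_hc]
  rw [Finset.sum_ite_eq]
  split_ifs with h
  · rfl
  · by_contra hw
    exact h (Finset.mem_image_of_mem _ (mem_support_iff.2 hw))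

/-- component map -/
noncomputable def gw (w : τ →₀ ℕ) : MvPolynomial τ B →+ MvPolynomial τ B :=
  (monomial w).toAddMonoidHom.comp (coeffAddMonoidHom w)

theorem KT_map_sum {α N N' κ : Type} [AddCommGroup N] [AddCommGroup N'] (F : Finset κ)
    (g : κ → N →+ N') (l : List α) (x : KT N l) :
    KT.map (∑ w ∈ F, g w) l x = ∑ w ∈ F, KT.map (g w) l x := by
  classical
  induction F using Finset.induction_on with
  | empty => rw [Finset.sum_empty, Finset.sum_empty, KT.map_zero']
  | insert a F ha ih => rw [Finset.sum_insert ha, Finset.sum_insert ha, KT.map_add', ih]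

theorem gw_sum (p : MvPolynomial τ B) (F : Finset (τ →₀ ℕ)) (hF : p.support ⊆ F) :
    (∑ w ∈ F, gw w) p = p := by
  rw [AddMonoidHom.finsetSum_apply]
  conv_rhs => rw [p.as_sum]
  symm
  apply Finset.sum_subset hF
  intro w _ hw
  rw [notMem_support_iff.1 hw, monomial_zero]

theorem KT_fin {α : Type} {s : ℤ} (l : List α) (j : ℤ) (z : KT (MvPolynomial τ B) l)
    (hz : z ∈ KD (Sg τ B s) l j) :
    ∃ F : Finset (τ →₀ ℕ), (∀ w ∈ F, (w.degree : ℤ) = s) ∧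
      ∀ F', F ⊆ F' → KT.map (∑ w ∈ F', gw w) l z = z := by
  induction l generalizing j with
  | nil =>
    by_cases hj : j = 0
    · subst hj
      have hz := KD_nil_zero.1 hz
      refine ⟨MvPolynomial.support z, ?_, ?_⟩
      · intro w hw
        exact hz w (mem_support_iff.1 hw)
      · intro F' hF'
        exact gw_sum z F' hF'
    · have hz : z = 0 := (KD_nil_ne hj).1 hz
      refine ⟨∅, by simp, ?_⟩
      intro F' _
      rw [hz, _root_.map_zero]
  | cons a l ih =>
    obtain ⟨x, y⟩ := z
    obtain ⟨F1, h1, k1⟩ := ih j x hz.1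
    obtain ⟨F2, h2, k2⟩ := ih (j - 1) y hz.2
    refine ⟨F1 ∪ F2, ?_, ?_⟩
    · intro w hw
      rcases Finset.mem_union.1 hw with h | h
      · exact h1 w h
      · exact h2 w h
    · intro F' hF'
      exact KT.cons_eq (k1 F' (Finset.union_subset_left hF')) (k2 F' (Finset.union_subset_right hF'))

/-- the two families of operators -/
noncomputable def oX (τ B : Type) [CommRing B] : τ → MvPolynomial τ B →+ MvPolynomial τ B := mu X

/-- multiplication by the constants -/
noncomputable def oF (f : τ → B) : τ → MvPolynomial τ B →+ MvPolynomial τ B := mu (fun a => C (f a))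

/-- exactness of the Koszul complex in degrees at least two -/
def KEx (f : τ → B) (l : List τ) : Prop := ∀ (i : ℤ), 2 ≤ i → ∀ z : KT B l, z ∈ KD ⊤ l i →
    KT.dd (mu f) l z = 0 → ∃ w ∈ KD ⊤ l (i + 1), KT.dd (mu f) l w = z

theorem koszul_S {f : τ → B} {l : List τ} (h : KEx f l) {i s : ℤ} (hi : 2 ≤ i)
    (z : KT (MvPolynomial τ B) l) (hz : z ∈ KD (Sg τ B s) l i) (hd : KT.dd (oF f) l z = 0) :
    ∃ w ∈ KD (Sg τ B s) l (i + 1), KT.dd (oF f) l w = z := by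
  obtain ⟨F, hF, hF'⟩ := KT_fin l i z hz
  have h1 : ∀ w : τ →₀ ℕ, ∃ u ∈ KD (⊤ : AddSubgroup B) l (i + 1),
      KT.dd (mu f) l u = KT.map (coeffAddMonoidHom w) l z := by
    intro w
    refine h i hi _ (KD_map (fun _ _ => AddSubgroup.mem_top _) hz) ?_
    rw [← KT.map_dd (coeffAddMonoidHom w) (oF f) (mu f) l, hd, _root_.map_zero]
    intro a _ x
    exact coeff_C_mul w (f a) x
  choose u hu hu' using h1
  refine ⟨∑ w ∈ F, KT.map (monomial w).toAddMonoidHom l (u w), sum_mem ?_, ?_⟩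
  · intro w hw
    refine KD_map (fun b _ => ?_) (hu w)
    rw [← hF w hw]
    exact Sg_monomial w b
  · rw [_root_.map_sum]
    conv_rhs => rw [← hF' F (Finset.Subset.refl _), KT_map_sum]
    refine Finset.sum_congr rfl fun w _ => ?_
    rw [← KT.map_dd (monomial w).toAddMonoidHom (mu f) (oF f) l, hu', KT.map_map]
    · rfl
    · intro a _ x
      exact (C_mul_monomial (s := w) (a := f a) (a' := x)).symm

theorem oX_comm (a b : τ) (x : MvPolynomial τ B) :
    oX τ B a (oX τ B b x) = oX τ B b (oX τ B a x) := mu_comm _ _ _ _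

theorem oX_oF (f : τ → B) (a b : τ) (x : MvPolynomial τ B) :
    oX τ B a (oF f b x) = oF f b (oX τ B a x) := mul_left_comm _ _ _

theorem oF_comm (f : τ → B) (a b : τ) (x : MvPolynomial τ B) :
    oF f a (oF f b x) = oF f b (oF f a x) := mul_left_comm _ _ _

theorem oX_mem {s : ℤ} {a : τ} {x : MvPolynomial τ B} (hx : x ∈ Sg τ B s) :
    oX τ B a x ∈ Sg τ B (s + 1) := Sg_X_mul a hx

theorem oF_mem {f : τ → B} {s : ℤ} {a : τ} {x : MvPolynomial τ B} (hx : x ∈ Sg τ B s) :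
    oF f a x ∈ Sg τ B s := by
  have := Sg_mul (Sg_C (τ := τ) (f a)) hx
  rwa [zero_add] at this

theorem Z_exact {f : τ → B} {l : List τ} (h : KEx f l) (hl : l.Nodup) (k : ℕ) :
    ∀ (i s : ℤ), 1 ≤ i → s < k → ∀ z ∈ KD (Sg τ B s) l i,
      KT.dd (oF f) l z = 0 → KT.dd (oX τ B) l z = 0 →
      ∃ w ∈ KD (Sg τ B (s - 1)) l (i + 1), KT.dd (oF f) l w = 0 ∧ KT.dd (oX τ B) l w = z := by
  induction k with
  | zero =>
    intro i s hi hs z hz _ _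
    have : z = 0 := KD_bot (KD_mono (fun p hp => AddSubgroup.mem_bot.2 (Sg_neg (by simpa using hs) hp)) hz)
    exact ⟨0, zero_mem _, _root_.map_zero _, by rw [this, _root_.map_zero]⟩
  | succ k ih =>
    intro i s hi hs z hz hd1 hd2
    obtain ⟨w0, hw0, c, -, -, e⟩ := KT_contract (φ := oX τ B) (T := Td) hl oX_comm
      (fun a x => Td_X a x) (fun a b hab x => Td_X_ne hab x) (fun a b x => Td_comm a b x)
      (Sg τ B s) (Sg τ B (s - 1)) (fun a _ x hx => Td_mem hx)
      (fun a _ x hx => by have := oX_mem (a := a) hx; rwa [sub_add_cancel] at this) i z hz hd2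
    rw [if_neg (by omega), add_zero] at e
    have hanti : ∀ x, KT.dd (oF f) l (KT.dd (oX τ B) l x) = - KT.dd (oX τ B) l (KT.dd (oF f) l x) :=
      fun x => KT.dd_anti (oF f) (oX τ B) l (fun a _ b _ x => (oX_oF f b a x).symm) x
    have hv : KT.dd (oF f) l w0 ∈ KD (Sg τ B (s - 1)) l i := by
      have := KD_dd (φ := oF f) (W := Sg τ B (s - 1)) (fun a _ x hx => oF_mem hx) hw0
      rwa [add_sub_cancel_right] at this
    obtain ⟨u, hu, hu1, hu2⟩ := ih i (s - 1) hi (by push_cast at hs; omega) (KT.dd (oF f) l w0) hv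
      (KT.dd_dd _ _ (fun a _ b _ x => oF_comm f a b x) _) (by
        rw [← neg_eq_zero, ← hanti, ← e, hd1])
    obtain ⟨u', hu', eu'⟩ := koszul_S h (by omega) u hu hu1
    refine ⟨w0 + KT.dd (oX τ B) l u', add_mem hw0 ?_, ?_, ?_⟩
    · have := KD_dd (φ := oX τ B) (W' := Sg τ B (s - 1)) (fun a _ x hx => by
        have := oX_mem (a := a) hx; rwa [sub_add_cancel] at this) hu'
      rwa [add_sub_cancel_right] at this
    · rw [_root_.map_add, hanti, eu', hu2]; exact add_neg_cancel _
    · rw [_root_.map_add, KT.dd_dd _ _ (fun a _ b _ x => oX_comm a b x), add_zero, e]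

/-- cycles -/
noncomputable def ZZ (f : τ → B) (l : List τ) (i b : ℤ) : AddSubgroup (KT (MvPolynomial τ B) l) :=
  KD (Sg τ B (b - i)) l i ⊓ (KT.dd (oF f) l).ker

/-- boundaries -/
noncomputable def UU (f : τ → B) (l : List τ) (i b : ℤ) : AddSubgroup (KT (MvPolynomial τ B) l) :=
  (ZZ f l (i + 1) b).map (KT.dd (oX τ B) l)

/-- variables acting on the Koszul complex -/
noncomputable def eX (τ B : Type) [CommRing B] (l : List τ) (a : τ) :
    KT (MvPolynomial τ B) l →+ KT (MvPolynomial τ B) l :=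
  KT.map (oX τ B a) l

theorem eX_comm (l : List τ) (a b : τ) (x : KT (MvPolynomial τ B) l) :
    eX τ B l a (eX τ B l b x) = eX τ B l b (eX τ B l a x) :=
  KT.map_comm (oX_comm a b) l x

theorem eX_mem {f : τ → B} {l : List τ} {i b : ℤ} {a : τ} {x : KT (MvPolynomial τ B) l}
    (hx : x ∈ ZZ f l i b) : eX τ B l a x ∈ ZZ f l i (b + 1) := by
  refine ⟨KD_map (fun p hp => ?_) hx.1, ?_⟩
  · have := oX_mem (a := a) hp
    rwa [show b - i + 1 = b + 1 - i by ring] at this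
  · have h2 : KT.dd (oF f) l x = 0 := hx.2
    change KT.dd (oF f) l (eX τ B l a x) = 0
    rw [eX, ← KT.map_dd (oX τ B a) (oF f) (oF f) l (fun c _ x => oX_oF f a c x), h2, _root_.map_zero]

theorem Td_C (a : τ) (b : B) (y : MvPolynomial τ B) : Td a (C b * y) = C b * Td a y := by
  ext v
  rw [coeff_Td, coeff_C_mul, coeff_C_mul, coeff_Td]

theorem Td_ZZ {f : τ → B} {l : List τ} {i b : ℤ} {a : τ} {x : KT (MvPolynomial τ B) l}
    (hx : x ∈ ZZ f l i b) : KT.map (Td a) l x ∈ ZZ f l i (b - 1) := by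
  have h1 : KT.map (Td a) l x ∈ KD (Sg τ B (b - 1 - i)) l i := by
    refine KD_map (fun p hp => ?_) hx.1
    have := Td_mem (i := a) hp
    rwa [show b - i - 1 = b - 1 - i by ring] at this
  have h2 : KT.dd (oF f) l x = 0 := hx.2
  have h3 : KT.dd (oF f) l (KT.map (Td a) l x) = 0 := by
    rw [← KT.map_dd (Td a) (oF f) (oF f) l, h2, _root_.map_zero]
    intro c _ y
    exact Td_C a (f c) y
  exact ⟨h1, h3⟩

theorem ZZ_VV (f : τ → B) {l : List τ} (hl : l.Nodup) (hall : ∀ a, a ∈ l) {i j b : ℤ}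
    (hb : j + i < b) : VV (eX τ B l) l (ZZ f l i) j b := by
  intro z hz hd
  obtain ⟨w, hw, c, hc, hc', e⟩ := KT_contract (φ := eX τ B l) (T := fun a => KT.map (Td a) l) hl
      (eX_comm l)
      (fun a x => by
        have e : (Td a).comp (oX τ B a) = AddMonoidHom.id _ := AddMonoidHom.ext (Td_X a)
        rw [eX, KT.map_map, e, KT.map_id])
      (fun a c hac x => by
        simp only [eX]
        have e : (Td a).comp (oX τ B c) = (oX τ B c).comp (Td a) :=
          AddMonoidHom.ext (Td_X_ne hac)
        rw [KT.map_map, KT.map_map, e])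
      (fun a c x => KT.map_comm (Td_comm a c) l x)
      (ZZ f l i (b - j)) (ZZ f l i (b - j - 1)) (fun a _ x hx => Td_ZZ hx)
      (fun a _ x hx => by have := eX_mem (a := a) hx; rwa [sub_add_cancel] at this) j z hz hd
  have hc0 : c = 0 := by
    refine KD_bot (KD_ker (g := fun a : τ => Td a) (W' := ⊥) ?_ hc.1 (fun a => hc' a (hall a)))
    intro x hx h
    exact AddSubgroup.mem_bot.2 (Td_ker (by omega) hx h)
  refine ⟨w, hw, ?_⟩
  rw [hc0, _root_.map_zero] at e
  simpa using e.symm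

theorem UU_VV {f : τ → B} {l : List τ} (h : KEx f l) (hl : l.Nodup) (hall : ∀ a, a ∈ l) (J : ℕ) :
    ∀ i b : ℤ, 0 ≤ i → J + i < b → VV (eX τ B l) l (UU f l i) (J - 1) b := by
  induction J with
  | zero =>
    intro i b hi _ z hz _
    exact ⟨0, zero_mem _, by rw [KD_neg (by norm_num) hz, _root_.map_zero]⟩
  | succ J ih =>
    intro i b hi hb
    push_cast at hb ⊢
    rw [add_sub_cancel_right]
    have hdm : ∀ (i b : ℤ), ∀ x ∈ ZZ f l (i + 1) b, KT.dd (oX τ B) l x ∈ ZZ f l i b := by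
      intro i b x hx
      refine ⟨?_, ?_⟩
      · have := KD_dd (φ := oX τ B) (W' := Sg τ B (b - i)) (fun a _ x hx => by
          have := oX_mem (a := a) hx
          rwa [show b - (i + 1) + 1 = b - i by ring] at this) hx.1
        rwa [add_sub_cancel_right] at this
      · have h2 : KT.dd (oF f) l x = 0 := hx.2
        change KT.dd (oF f) l (KT.dd (oX τ B) l x) = 0
        rw [KT.dd_anti (oF f) (oX τ B) l (fun a _ b _ x => (oX_oF f b a x).symm) x, h2,
          _root_.map_zero, neg_zero]
    refine VV_les1 (φ := eX τ B l) (P := ZZ f l (i + 1)) (P' := UU f l (i + 1)) (KT.dd (oX τ B) l)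
      (fun a _ c _ => eX_comm l a c) (fun a _ b x hx => eX_mem hx) ?_ ?_ ?_ ?_ ?_ ?_
      (ZZ_VV f hl hall (by omega)) (ih (i + 1) b (by omega) (by omega))
    · intro a _ x
      exact (KT.map_dd (oX τ B a) (oX τ B) (oX τ B) l (fun c _ x => oX_comm a c x) x).symm
    · intro b x hx
      exact ⟨x, hx, rfl⟩
    · rintro b _ ⟨x, hx, rfl⟩
      exact hdm _ _ x hx
    · rintro b _ ⟨x, hx, rfl⟩
      exact KT.dd_dd _ _ (fun a _ b _ x => oX_comm a b x) x
    · intro b x hx hdx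
      obtain ⟨w, hw, e1, e2⟩ := Z_exact h hl ((b - (i + 1)).toNat + 1) (i + 1) (b - (i + 1))
        (by omega) (by omega) x hx.1 hx.2 hdx
      refine ⟨w, ⟨?_, e1⟩, e2⟩
      rwa [show b - (i + 1) - 1 = b - (i + 1 + 1) by ring] at hw
    · rintro b _ ⟨x, hx, rfl⟩
      exact ⟨x, hx, rfl⟩

theorem RR_VV {f : τ → B} {l : List τ} (h : KEx f l) (hl : l.Nodup) (hall : ∀ a, a ∈ l)
    {M : Type} [AddCommGroup M] (ρ : MvPolynomial τ B →+ M) (ψ : τ → M →+ M)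
    (hψ : ∀ a p, ρ (X a * p) = ψ a (ρ p))
    (hker1 : ∀ (b : ℤ) (v : KT (MvPolynomial τ B) l), v ∈ KD (Sg τ B (b - 1)) l 1 →
      KT.dd (oF f) l v = 0 → ρ (KT.pr0 l (KT.dd (oX τ B) l v)) = 0)
    (hker : ∀ (b : ℤ), ∀ p ∈ Sg τ B b, ρ p = 0 → ∃ v ∈ KD (Sg τ B (b - 1)) l 1,
      KT.dd (oF f) l v = 0 ∧ KT.dd (oX τ B) l v = KT.inj l p) (j : ℕ) (b : ℤ) (hb : j < b) :
    VV ψ l (fun b => (Sg τ B b).map ρ) j b := by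
  have h2 := UU_VV h hl hall j 0 b le_rfl (by omega)
  refine VV_les1 (φ := eX τ B l) (P := ZZ f l 0) (P' := UU f l 0) (ρ.comp (KT.pr0 l))
      (fun a _ c _ => eX_comm l a c) (fun a _ b x hx => eX_mem hx) ?_ ?_ ?_ ?_ ?_ ?_
      (ZZ_VV f hl hall (by omega)) h2
  · intro a _ x
    have h3 : ∀ x : KT (MvPolynomial τ B) l, KT.pr0 l (eX τ B l a x) = X a * KT.pr0 l x := by
      unfold eX
      clear * -
      intro x
      induction l with
      | nil => rfl
      | cons c l ih => exact ih x.1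
    change ρ (KT.pr0 l (eX τ B l a x)) = _
    rw [h3, hψ]; rfl
  · intro b x hx
    have := (KD_zero hx.1).1
    rw [sub_zero] at this
    exact ⟨_, this, rfl⟩
  · rintro b _ ⟨x, hx, rfl⟩
    refine ⟨?_, ?_⟩
    · have := KD_dd (φ := oX τ B) (W' := Sg τ B (b - 0)) (fun a _ x hx => by
          have := oX_mem (a := a) hx
          rwa [show b - (0 + 1) + 1 = b - 0 by ring] at this) hx.1
      rwa [add_sub_cancel_right] at this
    · have h2 : KT.dd (oF f) l x = 0 := hx.2
      change KT.dd (oF f) l (KT.dd (oX τ B) l x) = 0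
      rw [KT.dd_anti (oF f) (oX τ B) l (fun a _ b _ x => (oX_oF f b a x).symm) x, h2,
          _root_.map_zero, neg_zero]
  · rintro b _ ⟨x, hx, rfl⟩
    have := hx.1
    rw [zero_add] at this
    exact hker1 b x this hx.2
  · intro b x hx hx0
    obtain ⟨h3, h4⟩ := KD_zero hx.1
    rw [sub_zero] at h3
    obtain ⟨v, hv, e1, e2⟩ := hker b _ h3 hx0
    refine ⟨v, ⟨?_, e1⟩, ?_⟩
    · rw [zero_add]; exact hv
    · rw [e2, ← h4]
  · rintro b _ ⟨p, hp, rfl⟩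
    refine ⟨KT.inj l p, ⟨?_, KT.dd_inj _ _ _⟩, ?_⟩
    · rw [sub_zero]; exact KD_inj hp
    · change ρ (KT.pr0 l (KT.inj l p)) = ρ p
      rw [KT.pr0_inj]

end SS

section FF
open MvPolynomial
set_option linter.unusedSectionVars false

variable {τ : Type} [DecidableEq τ] {B : Type} [CommRing B]

/-- graded piece of a free module -/
noncomputable def Fg {ι : Type} (τ B : Type) [CommRing B] (σ : ι → ℤ) (b : ℤ) :
    AddSubgroup (ι →₀ MvPolynomial τ B) where
  carrier := {p | ∀ k, p k ∈ Sg τ B (b - σ k)}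
  zero_mem' := fun _ => zero_mem _
  add_mem' := fun hp hq k => add_mem (hp k) (hq k)
  neg_mem' := fun hp k => neg_mem (hp k)

/-- variables acting on a free module -/
noncomputable def sX (τ B ι : Type) [CommRing B] (a : τ) :
    (ι →₀ MvPolynomial τ B) →+ (ι →₀ MvPolynomial τ B) where
  toFun x := (X a : MvPolynomial τ B) • x
  map_zero' := smul_zero _
  map_add' := smul_add _

theorem sX_apply {ι : Type} (a : τ) (x : ι →₀ MvPolynomial τ B) (k : ι) :
    sX τ B ι a x k = X a * x k := rfl

theorem sX_comm {ι : Type} (a c : τ) (x : ι →₀ MvPolynomial τ B) :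
    sX τ B ι a (sX τ B ι c x) = sX τ B ι c (sX τ B ι a x) := smul_comm _ _ _

theorem sX_mem {ι : Type} {σ : ι → ℤ} {a : τ} {b : ℤ} {x : ι →₀ MvPolynomial τ B}
    (hx : x ∈ Fg τ B σ b) : sX τ B ι a x ∈ Fg τ B σ (b + 1) := by
  intro k
  have := Sg_X_mul a (hx k)
  rwa [show b - σ k + 1 = b + 1 - σ k by ring] at this

/-- division on a free module -/
noncomputable def sT (τ B ι : Type) [CommRing B] (a : τ) :
    (ι →₀ MvPolynomial τ B) →+ (ι →₀ MvPolynomial τ B) := Finsupp.mapRange.addMonoidHom (Td a)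

theorem sT_apply {ι : Type} (a : τ) (x : ι →₀ MvPolynomial τ B) (k : ι) :
    sT τ B ι a x k = Td a (x k) := by
  simp [sT]

theorem Fg_VV {ι : Type} (σ : ι → ℤ) {l : List τ} (hl : l.Nodup) (hall : ∀ a, a ∈ l) {j b : ℤ}
    (hb : ∀ k, j + σ k < b) : VV (sX τ B ι) l (Fg τ B σ) j b := by
  intro z hz hd
  obtain ⟨w, hw, c, hc, hc', e⟩ := KT_contract (φ := sX τ B ι) (T := sT τ B ι) hl
      sX_comm
      (fun a x => Finsupp.ext fun k => by rw [sT_apply, sX_apply, Td_X])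
      (fun a c hac x => Finsupp.ext fun k => by
        rw [sT_apply, sX_apply, sX_apply, sT_apply, Td_X_ne hac])
      (fun a c x => Finsupp.ext fun k => by
        rw [sT_apply, sT_apply, sT_apply, sT_apply, Td_comm])
      (Fg τ B σ (b - j)) (Fg τ B σ (b - j - 1)) (fun a _ x hx k => by
        rw [sT_apply]
        have := Td_mem (i := a) (hx k)
        rwa [show b - j - σ k - 1 = b - j - 1 - σ k by ring] at this)
      (fun a _ x hx => by have := sX_mem (a := a) hx; rwa [sub_add_cancel] at this) j z hz hd
  have hc0 : c = 0 := by
    refine Finsupp.ext fun k => ?_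
    refine Td_ker (s := b - j - σ k) (by have := hb k; omega) (hc k) (fun a => ?_)
    rw [← sT_apply, hc' a (hall a)]; rfl
  refine ⟨w, hw, ?_⟩
  rw [hc0, _root_.map_zero] at e
  simpa using e.symm

theorem KT_pr0_map {α N N' : Type} [AddCommGroup N] [AddCommGroup N'] (g : N →+ N') (l : List α)
    (x : KT N l) : KT.pr0 l (KT.map g l x) = g (KT.pr0 l x) := by
  induction l with
  | nil => rfl
  | cons c l ih => exact ih x.1

theorem Fg_single {ι : Type} (σ : ι → ℤ) (k : ι) :
    Finsupp.single k (1 : MvPolynomial τ B) ∈ Fg τ B σ (σ k) := by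
  classical
  intro k'
  rw [Finsupp.single_apply]
  split_ifs with h
  · rw [h, sub_self, ← C_1]; exact Sg_C 1
  · exact zero_mem _

theorem step {ι N' : Type} [AddCommGroup N'] {σ : ι → ℤ} {l : List τ} (hl : l.Nodup)
    (hall : ∀ a, a ∈ l) (ψ : τ → N' →+ N') (Q : ℤ → AddSubgroup N') (i : ℤ)
    (hV : ∀ (j : ℕ) (b : ℤ), j + i < b → VV ψ l Q j b)
    (g : (ι →₀ MvPolynomial τ B) →+ N') (hg : ∀ a x, g (sX τ B ι a x) = ψ a (g x))
    (hgQ : ∀ b, ∀ x ∈ Fg τ B σ b, g x ∈ Q b) (hsurj : ∀ b, ∀ y ∈ Q b, ∃ x ∈ Fg τ B σ b, g x = y)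
    (𝔪 : Ideal (MvPolynomial τ B)) (hX : ∀ a, X a ∈ 𝔪) (h1 : (1 : MvPolynomial τ B) ∉ 𝔪)
    (hmin : ∀ x, g x = 0 → x ∈ 𝔪 • (⊤ : Submodule (MvPolynomial τ B) (ι →₀ MvPolynomial τ B))) :
    (∀ k, σ k ≤ i) ∧ ∀ (j : ℕ) (b : ℤ), j + (i + 1) < b →
      VV (sX τ B ι) l (fun b => Fg τ B σ b ⊓ g.ker) j b := by
  have A : ∀ k, σ k ≤ i := by
    intro k
    by_contra hk
    have hV0 := hV 0 (σ k) (by push_cast; omega)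
    obtain ⟨w, hw, ew⟩ := hV0 (KT.inj l (g (Finsupp.single k 1)))
      (KD_inj (by
        have := hgQ _ _ (Fg_single (τ := τ) (B := B) σ k)
        rwa [show σ k - ((0 : ℕ) : ℤ) = σ k by simp])) (KT.dd_inj _ _ _)
    obtain ⟨x, hx, ex⟩ := KD_lift (g := g) (fun y hy => hsurj _ y hy) hw
    set u := KT.pr0 l (KT.dd (sX τ B ι) l x) with hu
    have hgu : g u = g (Finsupp.single k 1) := by
      rw [hu, ← KT_pr0_map, KT.map_dd g (sX τ B ι) ψ l (fun a _ x => hg a x), ex, ew, KT.pr0_inj]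
    have h2 := hmin (Finsupp.single k 1 - u) (by rw [_root_.map_sub, hgu, sub_self])
    have h3 : u ∈ (𝔪 • (⊤ : Submodule (MvPolynomial τ B) (ι →₀ MvPolynomial τ B))).toAddSubgroup :=
      KT_pr0_dd (sX τ B ι) _ l _ (fun a _ x _ => Submodule.smul_mem_smul (hX a) Submodule.mem_top) x
        (by simpa using hx)
    have h4 := add_mem h2 h3
    rw [sub_add_cancel] at h4
    have h5 : ∀ y ∈ 𝔪 • (⊤ : Submodule (MvPolynomial τ B) (ι →₀ MvPolynomial τ B)), y k ∈ 𝔪 := by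
      intro y hy
      refine Submodule.smul_induction_on hy ?_ ?_
      · intro r hr n _
        exact Ideal.mul_mem_right _ _ hr
      · intro x y hx hy
        exact add_mem hx hy
    have h6 := h5 _ h4
    rw [Finsupp.single_eq_same] at h6
    exact h1 h6
  refine ⟨A, ?_⟩
  intro j b hb
  refine VV_les2 (φ := sX τ B ι) (ψ := ψ) (P := Fg τ B σ)
    (P' := fun b => Fg τ B σ b ⊓ g.ker) (Q := Q) g (fun a _ c _ x => sX_comm a c x)
    (fun a _ b x hx => sX_mem hx) (fun a _ x => hg a x) hgQ (fun b => inf_le_left)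
    (fun b x hx => hx.2) (fun b x hx h => ⟨hx, h⟩) hsurj
    (Fg_VV σ hl hall (fun k => by have := A k; omega)) ?_
  have := hV (j + 1) b (by push_cast; omega)
  rwa [Nat.cast_add, Nat.cast_one] at this

/-- component on a free module -/
noncomputable def hcF {ι : Type} (σ : ι → ℤ) (b : ℤ) :
    (ι →₀ MvPolynomial τ B) →+ (ι →₀ MvPolynomial τ B) where
  toFun x := Finsupp.onFinset x.support (fun k => hc (b - σ k) (x k)) (by
    intro k hk
    rw [Finsupp.mem_support_iff]
    intro h
    rw [h, _root_.map_zero] at hk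
    exact hk rfl)
  map_zero' := by
    ext1 k
    rw [Finsupp.onFinset_apply, Finsupp.zero_apply, _root_.map_zero]
  map_add' x y := by
    ext1 k
    rw [Finsupp.add_apply, Finsupp.onFinset_apply, Finsupp.onFinset_apply, Finsupp.onFinset_apply,
      Finsupp.add_apply, _root_.map_add]

theorem hcF_apply {ι : Type} (σ : ι → ℤ) (b : ℤ) (x : ι →₀ MvPolynomial τ B) (k : ι) :
    hcF σ b x k = hc (b - σ k) (x k) := rfl

theorem hcF_single {ι : Type} (σ : ι → ℤ) (b : ℤ) (k : ι) (p : MvPolynomial τ B) :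
    hcF σ b (Finsupp.single k p) = Finsupp.single k (hc (b - σ k) p) := by
  classical
  ext1 k'
  rw [hcF_apply, Finsupp.single_apply, Finsupp.single_apply]
  split_ifs with h
  · rw [h]
  · exact _root_.map_zero _

theorem lin_single {ι N : Type} [AddCommGroup N] [Module (MvPolynomial τ B) N]
    (g : (ι →₀ MvPolynomial τ B) →ₗ[MvPolynomial τ B] N) (k : ι) (p : MvPolynomial τ B) :
    g (Finsupp.single k p) = p • g (Finsupp.single k 1) := by
  rw [← _root_.map_smul, Finsupp.smul_single, smul_eq_mul, mul_one]

theorem gr_map {ι N : Type} [AddCommGroup N] [Module (MvPolynomial τ B) N]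
    (Q : ℤ → AddSubgroup N) (σ : ι → ℤ) (g : (ι →₀ MvPolynomial τ B) →ₗ[MvPolynomial τ B] N)
    (h1 : ∀ k, g (Finsupp.single k 1) ∈ Q (σ k))
    (hQ : ∀ s t, ∀ p ∈ Sg τ B s, ∀ q ∈ Q t, p • q ∈ Q (s + t)) (b : ℤ)
    (x : ι →₀ MvPolynomial τ B) (hx : x ∈ Fg τ B σ b) : g x ∈ Q b := by
  rw [← Finsupp.sum_single x, Finsupp.sum, _root_.map_sum]
  refine sum_mem fun k _ => ?_
  rw [lin_single]
  have := hQ _ _ _ (hx k) _ (h1 k)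
  rwa [sub_add_cancel] at this

theorem gr_surj {ι N N2 : Type} [AddCommGroup N] [Module (MvPolynomial τ B) N] [AddCommGroup N2]
    (Q : ℤ → AddSubgroup N) (σ : ι → ℤ) (g : (ι →₀ MvPolynomial τ B) →ₗ[MvPolynomial τ B] N)
    (h1 : ∀ k, g (Finsupp.single k 1) ∈ Q (σ k)) (e : N →+ N2) (he : Function.Injective e)
    (γ : ℤ → N →+ N2)
    (hγ : ∀ b t p, ∀ q ∈ Q t, γ b (p • q) = e ((hc (b - t) p : MvPolynomial τ B) • q))
    (hγ' : ∀ b, ∀ y ∈ Q b, γ b y = e y) (b : ℤ) (y : N) (hy : y ∈ Q b) (x : ι →₀ MvPolynomial τ B)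
    (hx : g x = y) : ∃ x ∈ Fg τ B σ b, g x = y := by
  refine ⟨hcF σ b x, fun k => hc_mem _ _, he ?_⟩
  rw [← hγ' b y hy, ← hx]
  have : (e.comp g.toAddMonoidHom).comp (hcF σ b) = (γ b).comp g.toAddMonoidHom := by
    refine Finsupp.addHom_ext fun k p => ?_
    change e (g (hcF σ b (Finsupp.single k p))) = γ b (g (Finsupp.single k p))
    rw [hcF_single, lin_single, lin_single g k p, hγ b _ p _ (h1 k)]
  exact DFunLike.congr_fun this x

theorem Fg_smul {ι : Type} (σ : ι → ℤ) (s t : ℤ) (p : MvPolynomial τ B) (hp : p ∈ Sg τ B s)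
    (q : ι →₀ MvPolynomial τ B) (hq : q ∈ Fg τ B σ t) : p • q ∈ Fg τ B σ (s + t) := by
  intro k
  have := Sg_mul hp (hq k)
  rwa [show s + (t - σ k) = s + t - σ k by ring] at this

theorem abs_res {l : List τ} (hl : l.Nodup) (hall : ∀ a, a ∈ l) {M N2 : Type} [AddCommGroup M]
    [Module (MvPolynomial τ B) M] [AddCommGroup N2] (Q : ℤ → AddSubgroup M)
    (hQ : ∀ s t, ∀ p ∈ Sg τ B s, ∀ q ∈ Q t, p • q ∈ Q (s + t))
    (e : M →+ N2) (he : Function.Injective e) (γ : ℤ → M →+ N2)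
    (hγ : ∀ b t p, ∀ q ∈ Q t, γ b (p • q) = e ((hc (b - t) p : MvPolynomial τ B) • q))
    (hγ' : ∀ b, ∀ y ∈ Q b, γ b y = e y)
    (ψ : τ → M →+ M) (hψ : ∀ a x, ψ a x = (X a : MvPolynomial τ B) • x)
    (hV : ∀ (j : ℕ) (b : ℤ), j < b → VV ψ l Q j b)
    (𝔪 : Ideal (MvPolynomial τ B)) (hX : ∀ a, X a ∈ 𝔪) (h1 : (1 : MvPolynomial τ B) ∉ 𝔪)
    (ι : ℕ → Type) (σ : ∀ i, ι i → ℤ)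
    (d : ∀ i, (ι (i + 1) →₀ MvPolynomial τ B) →ₗ[MvPolynomial τ B] (ι i →₀ MvPolynomial τ B))
    (ε : (ι 0 →₀ MvPolynomial τ B) →ₗ[MvPolynomial τ B] M)
    (exact_d : ∀ i, Function.Exact (d (i + 1)) (d i))
    (exact_ε : Function.Exact (d 0) ε)
    (surj : Function.Surjective ε)
    (gd : ∀ i k, d i (Finsupp.single k 1) ∈ Fg τ B (σ i) (σ (i + 1) k))
    (gε : ∀ k, ε (Finsupp.single k 1) ∈ Q (σ 0 k))
    (minimal : ∀ (i : ℕ) f, d i f ∈ 𝔪 • (⊤ : Submodule (MvPolynomial τ B) (ι i →₀ MvPolynomial τ B)))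
    (i : ℕ) : (∀ k, σ i k ≤ i) ∧ ∀ (j : ℕ) (b : ℤ), j + ((i : ℤ) + 1) < b →
      VV (sX τ B (ι i)) l (fun b => Fg τ B (σ i) b ⊓ (d i).toAddMonoidHom.range) j b := by
  induction i with
  | zero =>
    have h := step (σ := σ 0) hl hall ψ Q 0 (fun j b hb => hV j b (by omega)) ε.toAddMonoidHom
      (fun a x => by rw [hψ]; exact ε.map_smul _ _)
      (gr_map Q (σ 0) ε gε hQ)
      (fun b y hy => by
        obtain ⟨x, hx⟩ := surj y
        exact gr_surj Q (σ 0) ε gε e he γ hγ hγ' b y hy x hx)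
      𝔪 hX h1 (fun x hx => by
        obtain ⟨y, rfl⟩ := (exact_ε x).1 hx
        exact minimal 0 y)
    have hk : ε.toAddMonoidHom.ker = (d 0).toAddMonoidHom.range :=
      AddSubgroup.ext fun x => exact_ε x
    rw [hk] at h
    exact h
  | succ i ih =>
    have h := step (σ := σ (i + 1)) hl hall (sX τ B (ι i)) _ ((i : ℤ) + 1) ih.2
      (d i).toAddMonoidHom (fun a x => (d i).map_smul _ _)
      (fun b x hx => ⟨gr_map (Fg τ B (σ i)) (σ (i + 1)) (d i) (gd i) (Fg_smul (σ i)) b x hx, ⟨x, rfl⟩⟩)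
      (fun b y hy => by
        obtain ⟨hy, x, hx⟩ := hy
        refine gr_surj (Fg τ B (σ i)) (σ (i + 1)) (d i) (gd i) (AddMonoidHom.id _)
          (fun _ _ h => h) (hcF (σ i)) ?_ ?_ b y hy x hx
        · intro b t p q hq
          refine Finsupp.ext fun k => ?_
          have := hc_mul (t := b - t) p (hq k)
          rw [show b - t + (t - σ i k) = b - σ i k by ring] at this
          exact this
        · intro b y hy
          exact Finsupp.ext fun k => hc_of_mem (hy k))
      𝔪 hX h1 (fun x hx => by
        obtain ⟨y, rfl⟩ := (exact_d i x).1 hx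
        exact minimal (i + 1) y)
    have hk : (d i).toAddMonoidHom.ker = (d (i + 1)).toAddMonoidHom.range :=
      AddSubgroup.ext fun x => exact_d i x
    rw [hk] at h
    push_cast
    exact h

end FF

section RS
open MvPolynomial

theorem KT_pr0_two {α N N' : Type} [AddCommGroup N] [AddCommGroup N'] (g h : N →+ N')
    (φ ψ : α → N →+ N) (hg : ∀ a x, g (φ a x) = h (ψ a x)) (l : List α) (v : KT N l) :
    g (KT.pr0 l (KT.dd φ l v)) = h (KT.pr0 l (KT.dd ψ l v)) := by
  induction l with
  | nil =>
    rw [KT.dd_nil, KT.dd_nil, _root_.map_zero, _root_.map_zero, _root_.map_zero]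
  | cons a l ih =>
    obtain ⟨x, y⟩ := v
    have e : ∀ θ : α → N →+ N, KT.pr0 (a :: l) (KT.dd θ (a :: l) (x, y)) =
        KT.pr0 l (KT.dd θ l x) + θ a (KT.pr0 l y) := by
      intro θ
      rw [KT.dd_cons, ← KT_pr0_map, ← _root_.map_add]
      rfl
    rw [e, e, _root_.map_add, _root_.map_add, ih, hg]

variable {B : Type} [CommRing B] {n : ℕ}

/-- the presentation as an additive map -/
noncomputable def rhoA (I : Ideal B) (f : Fin (n + 1) → B) (hf : ∀ j, f j ∈ I) :
    MvPolynomial (Fin (n + 1)) B →+ reesAlgebra I :=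
  (reesStructureMap I f hf).toRingHom.toAddMonoidHom

theorem rho_coe (I : Ideal B) (f : Fin (n + 1) → B) (hf : ∀ j, f j ∈ I)
    (p : MvPolynomial (Fin (n + 1)) B) :
    ((reesStructureMap I f hf p : reesAlgebra I) : Polynomial B) =
      aeval (fun j => Polynomial.C (f j) * Polynomial.X) p := by
  have := MvPolynomial.comp_aeval_apply (fun j => fX I (f j) (hf j)) (reesAlgebra I).val p
  exact this

theorem rho_monomial (I : Ideal B) (f : Fin (n + 1) → B) (hf : ∀ j, f j ∈ I)
    (w : Fin (n + 1) →₀ ℕ) (c : B) :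
    ((reesStructureMap I f hf (monomial w c) : reesAlgebra I) : Polynomial B) =
      Polynomial.monomial w.degree (c * ∏ j, f j ^ w j) := by
  rw [rho_coe, aeval_monomial, Finsupp.prod_fintype _ _ (fun _ => pow_zero _)]
  simp only [mul_pow]
  rw [Finset.prod_mul_distrib, Finset.prod_pow_eq_pow_sum, ← Finsupp.degree_eq_sum,
    ← Polynomial.C_mul_X_pow_eq_monomial, _root_.map_mul, _root_.map_prod]
  simp only [_root_.map_pow]
  rw [mul_assoc]
  rfl

/-- component of a polynomial -/
noncomputable def Gam (B : Type) [CommRing B] (b : ℤ) : Polynomial B →+ Polynomial B :=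
  if 0 ≤ b then
    (Polynomial.monomial b.toNat).toAddMonoidHom.comp (Polynomial.lcoeff B b.toNat).toAddMonoidHom
  else 0

theorem coeff_Gam (b : ℤ) (p : Polynomial B) (k : ℕ) :
    (Gam B b p).coeff k = if (k : ℤ) = b then p.coeff k else 0 := by
  unfold Gam
  by_cases hb : 0 ≤ b
  · rw [if_pos hb]
    change (Polynomial.monomial b.toNat (p.coeff b.toNat)).coeff k = _
    rw [Polynomial.coeff_monomial]
    by_cases h : (k : ℤ) = b
    · have h' : b.toNat = k := by omega
      rw [if_pos h, if_pos h', h']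
    · rw [if_neg h, if_neg (by omega)]
  · rw [if_neg hb, if_neg (by omega)]
    exact Polynomial.coeff_zero k

theorem Gam_rho (I : Ideal B) (f : Fin (n + 1) → B) (hf : ∀ j, f j ∈ I) (b : ℤ)
    (p : MvPolynomial (Fin (n + 1)) B) :
    Gam B b ((reesStructureMap I f hf p : reesAlgebra I) : Polynomial B) =
      ((reesStructureMap I f hf (hc b p) : reesAlgebra I) : Polynomial B) := by
  induction p using MvPolynomial.induction_on' with
  | monomial w c =>
    by_cases h : (w.degree : ℤ) = b
    · rw [hc_of_mem (h ▸ Sg_monomial w c), rho_monomial]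
      ext k
      rw [coeff_Gam, Polynomial.coeff_monomial]
      by_cases hk : w.degree = k
      · rw [if_pos (by omega)]
      · rw [if_neg hk, ite_self]
    · have : hc b (monomial w c) = 0 := by
        ext v
        rw [coeff_hc, coeff_monomial, coeff_zero]
        split_ifs with h1 h2
        · rw [← h2] at h1; exact absurd h1 h
        · rfl
        · rfl
      rw [this, _root_.map_zero, rho_monomial]
      ext k
      rw [coeff_Gam, Polynomial.coeff_monomial]
      by_cases hk : w.degree = k
      · rw [if_neg (by omega)]; rfl
      · rw [if_neg hk, ite_self]; rfl
  | add p q hp hq =>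
    rw [_root_.map_add, Subalgebra.coe_add, _root_.map_add, hp, hq, _root_.map_add, _root_.map_add,
      Subalgebra.coe_add]

theorem rho_surj (I : Ideal B) (f : Fin (n + 1) → B) (hf : ∀ j, f j ∈ I)
    (hI : I = Ideal.span (Set.range f)) (x : reesAlgebra I) :
    ∃ p, reesStructureMap I f hf p = x := by
  have h1 : reesAlgebra I ≤ ((reesAlgebra I).val.comp (reesStructureMap I f hf)).range := by
    refine (adjoin_monomial_eq_reesAlgebra I).ge.trans (Algebra.adjoin_le_iff.2 ?_)
    rintro _ ⟨y, hy, rfl⟩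
    have hy : y ∈ I := hy
    rw [hI] at hy
    obtain ⟨c, hc⟩ := Ideal.mem_span_range_iff_exists_fun.1 hy
    refine ⟨∑ j, C (c j) * X j, ?_⟩
    change ((reesStructureMap I f hf _ : reesAlgebra I) : Polynomial B) = _
    rw [rho_coe, _root_.map_sum, ← hc, _root_.map_sum]
    refine Finset.sum_congr rfl fun j _ => ?_
    rw [_root_.map_mul, aeval_C, aeval_X, ← Polynomial.C_mul_X_eq_monomial, _root_.map_mul, mul_assoc]
    rfl
  obtain ⟨p, hp⟩ := h1 x.2
  exact ⟨p, Subtype.ext hp⟩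

theorem ylin_eq {g : MvPolynomial (Fin (n + 1)) B} (hg : YLinear g) :
    g = C (coeff 0 g) + ∑ j, X j * C (coeff (Finsupp.single j 1) g) := by
  ext w
  rw [coeff_add, coeff_sum, coeff_C]
  have e : ∀ j : Fin (n + 1), coeff w (X j * C (coeff (Finsupp.single j 1) g) : MvPolynomial _ B) =
      if Finsupp.single j 1 = w then coeff (Finsupp.single j 1) g else 0 := by
    intro j
    rw [mul_comm, coeff_C_mul, coeff_X', mul_ite, mul_one, mul_zero]
  simp only [e]
  by_cases h0 : w = 0
  · subst h0
    rw [if_pos rfl, Finset.sum_eq_zero, add_zero]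
    intro j _
    rw [if_neg]
    simp
  · rw [if_neg (Ne.symm h0), zero_add]
    by_cases h1 : ∃ j, Finsupp.single j 1 = w
    · obtain ⟨j, rfl⟩ := h1
      rw [Finset.sum_eq_single j, if_pos rfl]
      · intro k _ hk
        rw [if_neg]
        intro h
        exact hk (Finsupp.single_left_injective one_ne_zero h)
      · intro h; exact absurd (Finset.mem_univ _) h
    · rw [Finset.sum_eq_zero]
      · by_contra hne
        have h2 := hg w hne
        obtain ⟨i, hi⟩ := Finsupp.ne_iff.1 h0
        simp only [Finsupp.coe_zero, Pi.zero_apply] at hi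
        apply h1
        refine ⟨i, ?_⟩
        ext k
        rw [Finsupp.single_apply]
        have h3 := Finset.add_sum_erase Finset.univ (fun j => w j) (Finset.mem_univ i)
        split_ifs with hik
        · rw [← hik]; omega
        · have h4 : w k ≤ ∑ j ∈ Finset.univ.erase i, w j :=
            Finset.single_le_sum (f := fun j => w j) (fun _ _ => Nat.zero_le _)
              (Finset.mem_erase.2 ⟨Ne.symm hik, Finset.mem_univ k⟩)
          omega
      · intro j _
        rw [if_neg]
        intro h; exact h1 ⟨j, h⟩

theorem lt_rel (I : Ideal B) (f : Fin (n + 1) → B) (hf : ∀ j, f j ∈ I)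
    (hlt : IsLinearTypePres (reesStructureMap I f hf)) (p : MvPolynomial (Fin (n + 1)) B)
    (hp : reesStructureMap I f hf p = 0) : ∃ a : Fin (n + 1) → MvPolynomial (Fin (n + 1)) B,
      p = ∑ j, X j * a j ∧ ∑ j, C (f j) * a j = 0 := by
  obtain ⟨G, hG, hk⟩ := hlt
  have hp' : p ∈ Ideal.span G := by
    rw [← hk]; exact hp
  refine Submodule.span_induction (p := fun p _ => ∃ a : Fin (n + 1) → MvPolynomial (Fin (n + 1)) B,
      p = ∑ j, X j * a j ∧ ∑ j, C (f j) * a j = 0) ?_ ?_ ?_ ?_ hp'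
  · intro g hg
    have h0 : reesStructureMap I f hf g = 0 := by
      have : g ∈ Ideal.span G := Ideal.subset_span hg
      rw [← hk] at this
      exact this
    have h1 := congrArg (fun x : reesAlgebra I => (x : Polynomial B)) h0
    have e := ylin_eq (hG g hg)
    rw [rho_coe, e, _root_.map_add, _root_.map_sum, aeval_C] at h1
    simp only [_root_.map_mul, aeval_X, aeval_C] at h1
    have c0 := congrArg (fun q : Polynomial B => q.coeff 0) h1
    have c1 := congrArg (fun q : Polynomial B => q.coeff 1) h1
    simp [Polynomial.coeff_C, Polynomial.algebraMap_apply, mul_assoc] at c0 c1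
    refine ⟨fun j => C (coeff (Finsupp.single j 1) g), ?_, ?_⟩
    · conv_lhs => rw [e, c0, C_0, zero_add]
    · simp only [← C_mul]
      rw [← _root_.map_sum, ← C_0]
      congr 1
  · exact ⟨0, by simp, by simp⟩
  · rintro x y _ _ ⟨a, h1, h2⟩ ⟨a', h1', h2'⟩
    refine ⟨a + a', ?_, ?_⟩
    · simp only [Pi.add_apply, mul_add, Finset.sum_add_distrib]
      rw [← h1, ← h1']
    · simp only [Pi.add_apply, mul_add, Finset.sum_add_distrib]
      rw [h2, h2', add_zero]
  · rintro r x _ ⟨a, h1, h2⟩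
    refine ⟨fun j => r * a j, ?_, ?_⟩
    · rw [h1, smul_eq_mul, Finset.mul_sum]
      exact Finset.sum_congr rfl fun j _ => mul_left_comm _ _ _
    · simp only [mul_left_comm _ r]
      rw [← Finset.mul_sum, h2, mul_zero]

theorem oX_apply (a : Fin (n + 1)) (x : MvPolynomial (Fin (n + 1)) B) : oX _ B a x = X a * x := rfl

theorem oF_apply (f : Fin (n + 1) → B) (a : Fin (n + 1)) (x : MvPolynomial (Fin (n + 1)) B) :
    oF f a x = C (f a) * x := rfl

theorem r_two (f : Fin (n + 1) → B) (r : MvPolynomial (Fin (n + 1)) B →+ Polynomial B)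
    (hr : ∀ p, r p = aeval (fun j => Polynomial.C (f j) * Polynomial.X) p)
    (l : List (Fin (n + 1))) (v : KT (MvPolynomial (Fin (n + 1)) B) l) :
    r (KT.pr0 l (KT.dd (oX _ B) l v)) =
      ((AddMonoidHom.mulLeft Polynomial.X).comp r) (KT.pr0 l (KT.dd (oF f) l v)) := by
  refine KT_pr0_two r _ (oX _ B) (oF f) ?_ l v
  intro a x
  rw [AddMonoidHom.comp_apply, AddMonoidHom.coe_mulLeft, oX_apply, oF_apply, hr, hr,
    _root_.map_mul, _root_.map_mul, aeval_X, aeval_C, Polynomial.algebraMap_eq]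
  ring

theorem rees_VV (I : Ideal B) (f : Fin (n + 1) → B) (hf : ∀ j, f j ∈ I)
    (hlt : IsLinearTypePres (reesStructureMap I f hf)) (hK : KEx f (List.finRange (n + 1)))
    (ψ : Fin (n + 1) → reesAlgebra I →+ reesAlgebra I)
    (hψ : ∀ a x, ψ a x = reesStructureMap I f hf (X a) * x) (j : ℕ) (b : ℤ) (hb : j < b) :
    VV ψ (List.finRange (n + 1)) (fun b => (Sg (Fin (n + 1)) B b).map
      (rhoA I f hf)) j b := by
  refine RR_VV hK (List.nodup_finRange _) List.mem_finRange _ ψ ?_ ?_ ?_ j b hb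
  · intro a p
    rw [hψ]
    exact _root_.map_mul (reesStructureMap I f hf) _ _
  · intro b v _ hv
    let r : MvPolynomial (Fin (n + 1)) B →+ Polynomial B :=
      ((reesAlgebra I).val.comp (reesStructureMap I f hf)).toRingHom.toAddMonoidHom
    have hr : ∀ p, r p = aeval (fun j => Polynomial.C (f j) * Polynomial.X) p :=
      fun p => rho_coe I f hf p
    have := r_two f r hr (List.finRange (n + 1)) v
    rw [hv, _root_.map_zero, _root_.map_zero] at this
    exact Subtype.ext this
  · intro b p hp h0
    obtain ⟨a, h1, h2⟩ := lt_rel I f hf hlt p h0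
    obtain ⟨v, hv, ev⟩ := KT_tup (fun j => hc (b - 1) (a j)) (Sg (Fin (n + 1)) B (b - 1))
      (List.finRange (n + 1)) (fun j _ => hc_mem _ _)
    refine ⟨v, hv, ?_, ?_⟩
    · rw [ev, ← Fin.sum_univ_def]
      have : ∑ j, C (f j) * hc (b - 1) (a j) = 0 := by
        have h3 := congrArg (hc (b - 1)) h2
        rw [_root_.map_zero, _root_.map_sum] at h3
        rw [← h3]
        refine Finset.sum_congr rfl fun j _ => ?_
        have := hc_mul (t := b - 1) (a j) (Sg_C (τ := Fin (n + 1)) (f j))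
        rw [add_zero] at this
        rw [mul_comm, ← this, mul_comm]
      exact (congrArg _ this).trans (_root_.map_zero _)
    · rw [ev, ← Fin.sum_univ_def]
      congr 1
      have h3 := congrArg (hc b) h1
      rw [hc_of_mem hp, _root_.map_sum] at h3
      rw [h3]
      refine Finset.sum_congr rfl fun j _ => ?_
      have := hc_mul (t := b - 1) (a j) (Sg_X (B := B) j)
      rw [sub_add_cancel] at this
      change X j * hc (b - 1) (a j) = _
      rw [mul_comm, ← this, mul_comm]

theorem mS_one (K : Type) [Field K] (m n : ℕ) : (1 : MvPolynomial (Fin (n + 1)) (MvPolynomial (Fin m) K)) ∉ mS K m n := by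
  intro h
  have h1 : mS K m n ≤ RingHom.ker ((constantCoeff (σ := Fin m) (R := K)).comp
      (constantCoeff (σ := Fin (n + 1)) (R := MvPolynomial (Fin m) K))) := by
    refine Ideal.span_le.2 ?_
    rintro _ (⟨j, rfl⟩ | ⟨j, rfl⟩)
    · change constantCoeff (constantCoeff (X j : MvPolynomial (Fin (n + 1)) (MvPolynomial (Fin m) K))) = 0
      rw [constantCoeff_X, _root_.map_zero]
    · change constantCoeff (constantCoeff (C (X j) : MvPolynomial (Fin (n + 1)) (MvPolynomial (Fin m) K))) = 0
      rw [constantCoeff_C, constantCoeff_X]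
  have h2 := h1 h
  rw [RingHom.mem_ker, _root_.map_one] at h2
  exact one_ne_zero h2

theorem SP_Sg (K : Type) [Field K] (m n : ℕ) (d : Fin (n + 1) → ℕ) (ab : ℤ × ℤ)
    (p : MvPolynomial (Fin (n + 1)) (MvPolynomial (Fin m) K)) (hp : p ∈ SPieces K m n d ab) :
    p ∈ Sg (Fin (n + 1)) (MvPolynomial (Fin m) K) ab.2 := by
  intro w hw
  have h := hp w
  unfold SAux at h
  split_ifs at h with h1
  · rw [← h1.1, Finsupp.degree_eq_sum]
    push_cast; rfl
  · exact absurd h hw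

theorem SP_one (K : Type) [Field K] (m n : ℕ) (d : Fin (n + 1) → ℕ) :
    (1 : MvPolynomial (Fin (n + 1)) (MvPolynomial (Fin m) K)) ∈ SPieces K m n d 0 := by
  intro w
  rw [coeff_one]
  split_ifs with h
  · subst h
    unfold SAux
    rw [if_pos]
    · have : ((0 : ℤ × ℤ).1 - ∑ j, (((0 : Fin (n + 1) →₀ ℕ) j : ℕ) : ℤ) * (d j : ℤ)).toNat = 0 := by
        simp
      rw [this]
      exact isHomogeneous_one (Fin m) K
    · simp
  · exact zero_mem _

theorem SP_single (K : Type) [Field K] (m n : ℕ) (d : Fin (n + 1) → ℕ) {ι : Type} (σ : ι → ℤ × ℤ)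
    (k k' : ι) : (Finsupp.single k (1 : MvPolynomial (Fin (n + 1)) (MvPolynomial (Fin m) K))) k' ∈
      SPieces K m n d (σ k - σ k') := by
  classical
  rw [Finsupp.single_apply]
  split_ifs with h
  · rw [h, sub_self]; exact SP_one K m n d
  · exact zero_mem _

theorem RP_map (K : Type) [Field K] (m n : ℕ) (I : Ideal (MvPolynomial (Fin m) K))
    (f : Fin (n + 1) → MvPolynomial (Fin m) K) (hf : ∀ j, f j ∈ I)
    (hI : I = Ideal.span (Set.range f)) (ab : ℤ × ℤ) (x : reesAlgebra I)
    (hx : x ∈ RPieces K m I ab) : x ∈ (Sg (Fin (n + 1)) (MvPolynomial (Fin m) K) ab.2).map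
      (rhoA I f hf) := by
  obtain ⟨p, rfl⟩ := rho_surj I f hf hI x
  refine ⟨hc ab.2 p, hc_mem _ _, Subtype.ext ?_⟩
  refine (Gam_rho I f hf ab.2 p).symm.trans ?_
  ext1 k
  rw [coeff_Gam]
  split_ifs with h
  · rfl
  · have h2 := hx k
    unfold RAux at h2
    rw [if_neg (fun h3 => h h3.1)] at h2
    exact ((Submodule.mem_bot K).1 h2).symm

end RS

set_option maxHeartbeats 1000000 in
set_option synthInstance.maxHeartbeats 400000 in
/-- The `y`-regularity of the Rees algebra of a linear-type ideal `I` with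
`μ(I) = grade(I) + 1` is `0`: in any minimal bigraded free resolution of `R(I)` over
`S = K[x_1,…,x_m,y_0,…,y_n]` (with `deg x_i = (1,0)`, `deg y_j = (d_j,1)`), every
bigraded shift `(a,b)` appearing in homological degree `i` satisfies `b ≤ i`. -/
theorem yreg_reesAlgebra_zero (K : Type) [Field K] (m n : ℕ)
    (I : Ideal (MvPolynomial (Fin m) K)) (d : Fin (n + 1) → ℕ)
    (f : Fin (n + 1) → MvPolynomial (Fin m) K) (hf : ∀ j, f j ∈ I)
    (hI : I = Ideal.span (Set.range f))
    (hhomog : ∀ j, f j ∈ MvPolynomial.homogeneousSubmodule (Fin m) K (d j))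
    (hht : idealHeight I = (n : ℕ∞))
    (hlt : IsLinearTypePres (reesStructureMap I f hf))
    (instM : Module (MvPolynomial (Fin (n + 1)) (MvPolynomial (Fin m) K)) (reesAlgebra I))
    (hinstM : instM = reesModule I f hf) :
    ∀ R : @MinGradedFreeRes K _ (MvPolynomial (Fin (n + 1)) (MvPolynomial (Fin m) K)) _ _
        (ℤ × ℤ) _ (SPieces K m n d) (mS K m n)
        (reesAlgebra I) _ instM _ (RPieces K m I),
      ∀ (i : ℕ) (k : R.ι i), (R.σ i k).2 ≤ (i : ℤ) := by
  subst hinstM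
  intro R i k
  letI : Module (MvPolynomial (Fin (n + 1)) (MvPolynomial (Fin m) K)) (reesAlgebra I) :=
    reesModule I f hf
  have hht' : ∀ P : Ideal (MvPolynomial (Fin m) K), P.IsPrime → I ≤ P → (n : ℕ∞) ≤ P.height := by
    intro P hP hIP
    have h1 := PrimeSpectrum.height_eq_orderHeight (⟨P, hP⟩ : PrimeSpectrum (MvPolynomial (Fin m) K))
    rw [← hht]
    refine (iInf₂_le (⟨P, hP⟩ : PrimeSpectrum (MvPolynomial (Fin m) K)) hIP).trans ?_
    rw [← h1]
  have hK : KEx f (List.finRange (n + 1)) := koszul_ht K m n I f hI hht'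
  have hV := rees_VV I f hf hlt hK (fun a => AddMonoidHom.mulLeft
    (reesStructureMap I f hf (MvPolynomial.X a))) (fun a x => rfl)
  have hsm : ∀ (p : MvPolynomial (Fin (n + 1)) (MvPolynomial (Fin m) K)) (x : reesAlgebra I),
      p • x = reesStructureMap I f hf p * x := fun p x => rfl
  refine (abs_res (N2 := Polynomial (MvPolynomial (Fin m) K)) (List.nodup_finRange (n + 1))
    List.mem_finRange
    (fun b => (Sg (Fin (n + 1)) (MvPolynomial (Fin m) K) b).map (rhoA I f hf)) ?_
    (reesAlgebra I).val.toRingHom.toAddMonoidHom ?_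
    (fun b => (Gam (MvPolynomial (Fin m) K) b).comp (reesAlgebra I).val.toRingHom.toAddMonoidHom)
    ?_ ?_ _ (fun a x => rfl) hV (mS K m n) ?_ (mS_one K m n) R.ι (fun i k => (R.σ i k).2) R.d R.ε
    R.exact_d R.exact_ε R.surj ?_ ?_ R.minimal i).1 k
  · rintro s t p hp _ ⟨q, hq, rfl⟩
    exact ⟨p * q, Sg_mul hp hq, _root_.map_mul (reesStructureMap I f hf) p q⟩
  · exact Subtype.val_injective
  · rintro b t p _ ⟨q, hq, rfl⟩
    have h1 := Gam_rho I f hf b (p * q)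
    have h2 := hc_mul (t := b - t) p hq
    rw [sub_add_cancel] at h2
    rw [h2, _root_.map_mul, _root_.map_mul] at h1
    exact h1
  · rintro b _ ⟨q, hq, rfl⟩
    have h1 := Gam_rho I f hf b q
    rw [hc_of_mem hq] at h1
    exact h1
  · intro a
    exact Ideal.subset_span (Or.inl ⟨a, rfl⟩)
  · intro i k k'
    exact SP_Sg K m n d _ _ (R.graded_d i (R.σ (i + 1) k) (Finsupp.single k 1)
      (fun k'' => SP_single K m n d (R.σ (i + 1)) k k'') k')
  · intro k
    exact RP_map K m n I f hf hI _ _ (R.graded_ε (R.σ 0 k) (Finsupp.single k 1)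
      (fun k'' => SP_single K m n d (R.σ 0) k k''))
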